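/- arXiv:1408.4093 — 9 statements merged into one kernel-verified Lean document; each statement's English description precedes it below -/
import Mathlib

section
/- For every finite poset P there exists a constant C > 0 such that for every natural number n, every family F of subsets of [n] = {1,…,n} that does not contain P as an induced subposet satisfies |F| ≤ C · C(n, ⌊n/2⌋), i.e., La#(n,P) ≤ C · C(n, ⌊n/2⌋). -/
/-!
The proof follows Methuku and Pálvölgyi. Two ingredients carry it.

*Forbidden patterns in `d`-dimensional arrays* (`card_le_of_not_hasPattern`, after Marcus–Tardos and
Klazar–Marcus). If a set of points of `[n]^(d+1)` contains no copy of a fixed pattern, where a copy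
must respect all strict inequalities between coordinates of the pattern, then it has `O(n^d)`
points. The array is cut into blocks of side `s`. The nonempty blocks form a smaller array avoiding
the pattern. A block that meets fewer than `k` residues in every direction has fewer than `k^(d+1)`
points. A block meeting at least `k` residues in direction `i` is *wide*; among the wide blocks at a
given height in direction `i` that have the same set of residues, the array obtained by dropping
coordinate `i` avoids the projected pattern, so induction on the dimension bounds their number. As
`s^d` exceeds `k^(d+1)`, the resulting recursion solves to `O(n^d)`.

*Averaging over random grids* (`card_middle_le`). Take the ground set to be `d` columns of height
`m`, permuted by a permutation `σ`. The images under `σ` of the sets consisting of an initial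
segment of every column form a copy of the grid `[0,m]^d`, ordered coordinatewise. A finite poset
embeds into such a grid by linear extensions (`exists_pattern`), so an induced `P`-free family
contains only `O(m^(d-1))` sets of each grid. A set whose size lies in the middle third of the
levels belongs to the grid of a random `σ` with probability at least a constant times
`m^(d-1) / C(N, N/2)`, where `N = d * m`, so the family has `O(C(N, N/2))` sets in these levels.
The remaining levels have `O(C(N, N/2))` sets altogether, by comparison with a geometric series.
An arbitrary `n` is rounded up to an admissible `N = n + O(1)`, which costs a constant factor.
-/

/-- The family `F` of subsets of `[n]` contains the poset `P` as an induced subposet. -/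
def ContainsInduced (P : Type*) [PartialOrder P] {n : ℕ}
    (F : Finset (Finset (Fin n))) : Prop :=
  ∃ α : P → Finset (Fin n), Function.Injective α ∧ (∀ p, α p ∈ F) ∧
    ∀ x y : P, x < y ↔ α x ⊂ α y

/-! ### Forbidden patterns in multidimensional arrays -/

/-- The point set `A` contains a copy of the pattern `π`: points of `A` indexed by `ι` which satisfy
every strict inequality between coordinates of the pattern. Equal coordinates of the pattern
impose no condition. -/
def HasPattern {ι : Type} {d : ℕ} (π : ι → Fin d → ℕ) (A : Finset (Fin d → ℕ)) : Prop :=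
  ∃ φ : ι → Fin d → ℕ, (∀ p, φ p ∈ A) ∧ ∀ p q i, π p i < π q i → φ p i < φ q i

/-- The element of `S` assigned to `p` is the one whose rank is the number of `r` with
`f r < f p`. -/
lemma exists_order_preserving {ι : Type} [Fintype ι] (f : ι → ℕ) (S : Finset ℕ)
    (h : Fintype.card ι ≤ S.card) :
    ∃ g : ι → ℕ, (∀ p, g p ∈ S) ∧ ∀ p q, f p < f q → g p < g q := by
  classical
  have hr : ∀ p, (Finset.univ.filter fun r => f r < f p).card < S.card := fun p =>
    lt_of_lt_of_le (Finset.card_lt_univ_of_notMem (x := p) (by simp)) h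
  refine ⟨fun p => S.orderEmbOfFin rfl ⟨_, hr p⟩, fun p => Finset.orderEmbOfFin_mem _ _ _,
    fun p q hpq => ?_⟩
  rw [OrderEmbedding.lt_iff_lt, Fin.mk_lt_mk]
  apply Finset.card_lt_card
  rw [Finset.ssubset_iff_of_subset]
  · exact ⟨p, by simpa using hpq, by simp⟩
  · intro r
    simp only [Finset.mem_filter, Finset.mem_univ, true_and]
    intro hr
    omega

lemma card_le_of_not_hasPattern_one {ι : Type} [Fintype ι] (π : ι → Fin 1 → ℕ)
    (A : Finset (Fin 1 → ℕ)) (h : ¬ HasPattern π A) : A.card ≤ Fintype.card ι := by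
  classical
  by_contra hlt
  apply h
  have hinj : Function.Injective (fun a : Fin 1 → ℕ => a 0) := by
    intro a b hab
    funext i
    rw [Subsingleton.elim i 0]
    exact hab
  obtain ⟨g, hg, hlt⟩ := exists_order_preserving (fun p => π p 0) (A.image fun a => a 0)
    (by rw [Finset.card_image_of_injective _ hinj]; omega)
  refine ⟨fun p _ => g p, fun p => ?_, fun p q i hi => ?_⟩
  · obtain ⟨a, ha, hag⟩ := Finset.mem_image.1 (hg p)
    have : (fun _ => g p) = a := hinj hag.symm
    simpa only [this] using ha
  · rw [Subsingleton.elim i 0] at hi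
    exact hlt p q hi

/-- The index of the block of side `s` containing the point `a`. -/
def blk (s : ℕ) {d : ℕ} (a : Fin d → ℕ) : Fin d → ℕ := fun i => a i / s

/-- The residues modulo `s` of the `i`-th coordinates of the points of `A` in the block `b`; they
correspond to the different values of these coordinates. -/
def residues (s : ℕ) {d : ℕ} (A : Finset (Fin d → ℕ)) (i : Fin d) (b : Fin d → ℕ) : Finset ℕ :=
  (A.filter fun a => blk s a = b).image fun a => a i % s

lemma lt_of_div_lt {s x y : ℕ} (h : x / s < y / s) : x < y := by
  by_contra hxy
  exact absurd (Nat.div_le_div_right (c := s) (not_lt.1 hxy)) (not_le.2 h)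

lemma not_hasPattern_blocks {ι : Type} {d s : ℕ} (π : ι → Fin d → ℕ)
    (A : Finset (Fin d → ℕ)) (h : ¬ HasPattern π A) : ¬ HasPattern π (A.image (blk s)) := by
  rintro ⟨φ, hφ, hlt⟩
  apply h
  choose a ha hab using fun p => Finset.mem_image.1 (hφ p)
  refine ⟨a, ha, fun p q i hi => lt_of_div_lt (s := s) ?_⟩
  have := hlt p q i hi
  rw [← hab p, ← hab q] at this
  exact this

lemma card_block_le {d s : ℕ} (A : Finset (Fin d → ℕ)) (b : Fin d → ℕ) :
    (A.filter fun a => blk s a = b).card ≤ ∏ i, (residues s A i b).card := by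
  classical
  rw [← Fintype.card_piFinset]
  apply Finset.card_le_card_of_injOn (fun a i => a i % s)
  · intro a ha
    simp only [Finset.mem_coe, Fintype.mem_piFinset]
    intro i
    exact Finset.mem_image_of_mem (fun a : Fin d → ℕ => a i % s) ha
  · intro a ha a' ha' haa
    have h1 := (Finset.mem_filter.1 ha).2
    have h2 := (Finset.mem_filter.1 ha').2
    funext i
    have h3 : a i / s = a' i / s := congrFun (h1.trans h2.symm) i
    have h4 : a i % s = a' i % s := congrFun haa i
    rw [← Nat.div_add_mod (a i) s, h3, h4, Nat.div_add_mod]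

/-- Bound for the number of blocks that are wide in direction `i`. They are classified by their
`i`-th block index and their set of residues. Within one class, a copy of the pattern with
coordinate `i` removed lifts to a copy of `π` in `A`, since every block of the class has points at
each of the common (at least `card ι`) heights. -/
lemma card_wide_le {ι : Type} [Fintype ι] {d s n K : ℕ} (hs : 0 < s)
    (π : ι → Fin (d + 2) → ℕ) (i : Fin (d + 2))
    (hK : ∀ B : Finset (Fin (d + 1) → ℕ), (∀ b ∈ B, ∀ j, b j < n) →
      ¬ HasPattern (fun p => i.removeNth (π p)) B → B.card ≤ K)
    (A : Finset (Fin (d + 2) → ℕ)) (hA : ∀ a ∈ A, ∀ j, a j < s * n)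
    (h : ¬ HasPattern π A) :
    ((A.image (blk s)).filter fun b => Fintype.card ι ≤ (residues s A i b).card).card
      ≤ K * (n * 2 ^ s) := by
  classical
  set W := (A.image (blk s)).filter fun b => Fintype.card ι ≤ (residues s A i b).card with hW
  have hB : ∀ b ∈ W, ∀ j, b j < n := by
    intro b hb j
    obtain ⟨a, ha, rfl⟩ := Finset.mem_image.1 (Finset.mem_filter.1 hb).1
    exact Nat.div_lt_of_lt_mul (hA a ha j)
  have hcard : (Finset.range n ×ˢ (Finset.range s).powerset).card = n * 2 ^ s := by simp
  rw [← hcard]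
  apply Finset.card_le_mul_card_image_of_maps_to (f := fun b => (b i, residues s A i b))
  · intro b hb
    simp only [Finset.mem_product, Finset.mem_range, Finset.mem_powerset]
    refine ⟨hB b hb i, fun x hx => ?_⟩
    obtain ⟨a, _, rfl⟩ := Finset.mem_image.1 hx
    exact Finset.mem_range.2 (Nat.mod_lt _ hs)
  · rintro ⟨v, T⟩ -
    set V := W.filter fun b => (b i, residues s A i b) = (v, T) with hV
    have hVv : ∀ b ∈ V, b i = v ∧ residues s A i b = T := fun b hb => by
      simpa using (Finset.mem_filter.1 hb).2
    have hinj : Set.InjOn (fun b : Fin (d + 2) → ℕ => i.removeNth b) V := by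
      intro b hb b' hb' hbb
      rw [← Fin.insertNth_self_removeNth i b, ← Fin.insertNth_self_removeNth i b',
        (hVv b hb).1, (hVv b' hb').1]
      exact congrArg _ hbb
    rw [← Finset.card_image_of_injOn hinj]
    apply hK
    · intro b hb j
      obtain ⟨b', hb', rfl⟩ := Finset.mem_image.1 hb
      exact hB b' (Finset.mem_filter.1 hb').1 _
    · rintro ⟨ψ, hψ, hlt⟩
      apply h
      choose b hb hbψ using fun p => Finset.mem_image.1 (hψ p)
      rcases isEmpty_or_nonempty ι with hι | ⟨⟨p₀⟩⟩
      · exact ⟨fun p => isEmptyElim p, fun p => isEmptyElim p, fun p => isEmptyElim p⟩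
      have hT : Fintype.card ι ≤ T.card := by
        rw [← (hVv _ (hb p₀)).2]
        exact (Finset.mem_filter.1 (Finset.mem_filter.1 (hb p₀)).1).2
      obtain ⟨g, hgT, hg⟩ := exists_order_preserving (fun p => π p i) T hT
      have hex : ∀ p, ∃ a ∈ A, blk s a = b p ∧ a i % s = g p := by
        intro p
        have := hgT p
        rw [← (hVv _ (hb p)).2] at this
        obtain ⟨a, ha, hag⟩ := Finset.mem_image.1 this
        exact ⟨a, (Finset.mem_filter.1 ha).1, (Finset.mem_filter.1 ha).2, hag⟩
      choose a ha hab hag using hex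
      refine ⟨a, ha, fun p q j hj => ?_⟩
      rcases Fin.eq_self_or_eq_succAbove i j with rfl | ⟨j', rfl⟩
      · have h1 : a p j / s = a q j / s :=
          (congrFun (hab p) j).trans (((hVv _ (hb p)).1.trans (hVv _ (hb q)).1.symm).trans
            (congrFun (hab q) j).symm)
        have h2 := hg p q hj
        rw [← hag p, ← hag q] at h2
        rw [← Nat.div_add_mod (a p j) s, ← Nat.div_add_mod (a q j) s, h1]
        omega
      · apply lt_of_div_lt (s := s)
        have h1 := hlt p q j' hj
        rw [← hbψ p, ← hbψ q, ← hab p, ← hab q] at h1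
        exact h1

/-- The recursion behind the bound: `L` bounds the number of nonempty blocks and `K` bounds the
arrays of one dimension less. -/
lemma card_le_blocks {ι : Type} [Fintype ι] {d s n K L : ℕ} (hs : 0 < s)
    (π : ι → Fin (d + 2) → ℕ)
    (hK : ∀ i : Fin (d + 2), ∀ B : Finset (Fin (d + 1) → ℕ), (∀ b ∈ B, ∀ j, b j < n) →
      ¬ HasPattern (fun p => i.removeNth (π p)) B → B.card ≤ K)
    (hL : ∀ B : Finset (Fin (d + 2) → ℕ), (∀ b ∈ B, ∀ j, b j < n) →
      ¬ HasPattern π B → B.card ≤ L)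
    (A : Finset (Fin (d + 2) → ℕ)) (hA : ∀ a ∈ A, ∀ j, a j < s * n)
    (h : ¬ HasPattern π A) :
    A.card ≤ L * Fintype.card ι ^ (d + 2) + (d + 2) * (K * (n * 2 ^ s) * s ^ (d + 2)) := by
  classical
  set k := Fintype.card ι
  have hblock : ∀ b ∈ A.image (blk s), (A.filter fun a => blk s a = b).card ≤
      k ^ (d + 2) + ∑ i, if k ≤ (residues s A i b).card then s ^ (d + 2) else 0 := by
    intro b _
    refine (card_block_le A b).trans ?_
    by_cases hw : ∃ i, k ≤ (residues s A i b).card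
    · obtain ⟨i, hi⟩ := hw
      refine le_trans ?_ (Nat.le_add_left _ _)
      refine le_trans ?_ (Finset.single_le_sum (f := fun i =>
        if k ≤ (residues s A i b).card then s ^ (d + 2) else 0) (fun _ _ => Nat.zero_le _)
        (Finset.mem_univ i))
      simp only [hi, if_true]
      refine (Finset.prod_le_pow_card _ _ s fun j _ => ?_).trans (by simp)
      refine (Finset.card_le_card (t := Finset.range s) fun x hx => ?_).trans (by simp)
      obtain ⟨a, _, rfl⟩ := Finset.mem_image.1 hx
      exact Finset.mem_range.2 (Nat.mod_lt _ hs)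
    · push Not at hw
      refine le_trans ?_ (Nat.le_add_right _ _)
      exact (Finset.prod_le_pow_card _ _ k fun j _ => (hw j).le).trans (by simp)
  calc A.card = ∑ b ∈ A.image (blk s), (A.filter fun a => blk s a = b).card :=
        Finset.card_eq_sum_card_image _ _
    _ ≤ ∑ b ∈ A.image (blk s), (k ^ (d + 2) +
          ∑ i, if k ≤ (residues s A i b).card then s ^ (d + 2) else 0) :=
        Finset.sum_le_sum hblock
    _ = (A.image (blk s)).card * k ^ (d + 2) + ∑ i,
          ((A.image (blk s)).filter fun b => k ≤ (residues s A i b).card).card * s ^ (d + 2) := by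
        rw [Finset.sum_add_distrib, Finset.sum_comm]
        simp [Finset.sum_ite]
    _ ≤ L * k ^ (d + 2) + ∑ i : Fin (d + 2), K * (n * 2 ^ s) * s ^ (d + 2) := by
        gcongr with i
        · apply hL _ _ (not_hasPattern_blocks π A h)
          intro b hb j
          obtain ⟨a, ha, rfl⟩ := Finset.mem_image.1 hb
          exact Nat.div_lt_of_lt_mul (hA a ha j)
        · exact card_wide_le hs π i (hK i) A hA h
    _ = _ := by simp

/-- The bound for arrays whose side is a power of `s = (k + 2)^2`; this `s` works in every dimension
because `k^(d+2) < s^(d+1)`. -/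
lemma card_le_of_not_hasPattern_pow (ι : Type) [Fintype ι] (d : ℕ) :
    ∃ C : ℕ, ∀ (π : ι → Fin (d + 1) → ℕ) (j : ℕ) (A : Finset (Fin (d + 1) → ℕ)),
      (∀ a ∈ A, ∀ i, a i < ((Fintype.card ι + 2) ^ 2) ^ j) → ¬ HasPattern π A →
      A.card ≤ C * (((Fintype.card ι + 2) ^ 2) ^ j) ^ d := by
  set k := Fintype.card ι with hk
  set s := (k + 2) ^ 2 with hs
  induction d with
  | zero =>
    exact ⟨k, fun π j A _ h => by simpa using card_le_of_not_hasPattern_one π A h⟩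
  | succ d ih =>
    obtain ⟨K, hK⟩ := ih
    set D := (d + 2) * (K * 2 ^ s * s ^ (d + 2)) with hD
    refine ⟨D + 1, fun π j => ?_⟩
    induction j with
    | zero =>
      intro A hA _
      have : A.card ≤ 1 := by
        rw [Finset.card_le_one]
        intro a ha b hb
        funext i
        have h1 := hA a ha i
        have h2 := hA b hb i
        simp only [pow_zero] at h1 h2
        omega
      simp
      omega
    | succ j ihj =>
      intro A hA h
      have hpow : k ^ (d + 2) + 1 ≤ s ^ (d + 1) := by
        calc k ^ (d + 2) + 1 ≤ (k + 2) ^ (d + 2) :=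
              Nat.pow_lt_pow_left (by omega) (by omega)
          _ ≤ (k + 2) ^ (2 * (d + 1)) := Nat.pow_le_pow_right (by omega) (by omega)
          _ = s ^ (d + 1) := by rw [hs, pow_mul]
      have hmain := card_le_blocks (s := s) (n := s ^ j) (by positivity) π
        (fun i B hB hp => hK _ j B hB hp) ihj A (by rwa [← pow_succ']) h
      calc A.card ≤ _ := hmain
        _ = ((D + 1) * k ^ (d + 2) + D) * (s ^ j) ^ (d + 1) := by rw [hD, ← hk]; ring
        _ ≤ ((D + 1) * (k ^ (d + 2) + 1)) * (s ^ j) ^ (d + 1) := by gcongr; linarith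
        _ ≤ ((D + 1) * s ^ (d + 1)) * (s ^ j) ^ (d + 1) := by gcongr
        _ = _ := by rw [mul_assoc, ← mul_pow, ← pow_succ']

/-- A point set in `[0,n)^(d+1)` that contains no copy of a given pattern has `O(n^d)` points, with
a constant depending only on `d` and the size of the pattern. -/
theorem card_le_of_not_hasPattern (ι : Type) [Fintype ι] (d : ℕ) :
    ∃ C : ℕ, ∀ (π : ι → Fin (d + 1) → ℕ) (n : ℕ) (A : Finset (Fin (d + 1) → ℕ)), 0 < n →
      (∀ a ∈ A, ∀ i, a i < n) → ¬ HasPattern π A → A.card ≤ C * n ^ d := by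
  obtain ⟨C, hC⟩ := card_le_of_not_hasPattern_pow ι d
  set s := (Fintype.card ι + 2) ^ 2 with hs
  have hs1 : 1 < s := Nat.one_lt_pow (by norm_num) (by omega)
  refine ⟨C * s ^ d, fun π n A hn hA h => ?_⟩
  have h1 : n < s ^ (Nat.log s n + 1) := Nat.lt_pow_succ_log_self hs1 n
  have h2 : s ^ Nat.log s n ≤ n := Nat.pow_log_le_self s hn.ne'
  calc A.card ≤ C * (s ^ (Nat.log s n + 1)) ^ d :=
        hC π _ A (fun a ha i => (hA a ha i).trans h1) h
    _ ≤ C * (s * n) ^ d := by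
        rw [pow_succ']
        gcongr
    _ = _ := by rw [mul_pow, mul_assoc]

/-! ### Realizing a poset by linear extensions -/

/-- Every `x : P` gives a linear extension `f x` of `P` in which the down-set of `x` comes first.
The order of `P` is the intersection of these linear extensions. -/
lemma exists_linear_coords (P : Type) [PartialOrder P] [Fintype P] :
    ∃ f : P → P → ℕ, (∀ x, Function.Injective (f x)) ∧
      (∀ x y z, y ≤ z → f x y ≤ f x z) ∧ ∀ x y, ¬ y ≤ x → f x x < f x y := by
  classical
  -- `e` is a linear extension: sizes of strict down-sets, with ties broken by a numbering
  let e : P → ℕ := fun y => Fintype.card P * (Finset.univ.filter fun z => z < y).card +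
    (Fintype.equivFin P y : ℕ)
  have hlt : ∀ y, (Fintype.equivFin P y : ℕ) < Fintype.card P := fun y => (Fintype.equivFin P y).2
  have he_inj : Function.Injective e := by
    intro y z h
    have h1 : e y % Fintype.card P = e z % Fintype.card P := by rw [h]
    simp only [e, Nat.mul_add_mod, Nat.mod_eq_of_lt (hlt _)] at h1
    exact (Fintype.equivFin P).injective (Fin.ext h1)
  have he_mono : ∀ y z, y ≤ z → e y ≤ e z := by
    intro y z h
    rcases h.eq_or_lt with rfl | h
    · exact le_rfl
    · have hc : (Finset.univ.filter fun w => w < y).card + 1 ≤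
          (Finset.univ.filter fun w => w < z).card := by
        apply Finset.card_lt_card
        rw [Finset.ssubset_iff_of_subset]
        · exact ⟨y, by simpa using h, by simp⟩
        · intro w
          simp only [Finset.mem_filter, Finset.mem_univ, true_and]
          exact fun hw => hw.trans h
      have := Nat.mul_le_mul_left (Fintype.card P) hc
      have := hlt y
      simp only [e]
      rw [mul_add] at *
      omega
  let M := ∑ y, e y + 1
  have hM : ∀ y, e y < M := fun y => Nat.lt_succ_of_le
    (Finset.single_le_sum (f := e) (fun _ _ => Nat.zero_le _) (Finset.mem_univ y))
  refine ⟨fun x y => if y ≤ x then e y else e y + M, ?_, ?_, ?_⟩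
  · intro x y z h
    have := hM y
    have := hM z
    dsimp only at h
    split_ifs at h <;> first | exact he_inj h | exact he_inj (by omega)
  · intro x y z h
    have := he_mono y z h
    have := hM y
    dsimp only
    split_ifs with h1 h2 <;> first | omega | exact absurd (h.trans ‹z ≤ x›) h1
  · intro x y h
    have := hM x
    simp only [le_refl, if_true, h, if_false]
    omega

/-! ### Binomial coefficients and counting permutations -/

/-- In the lower third of the levels each binomial coefficient is at least twice the preceding
one. -/
lemma sum_choose_le (N T : ℕ) (h : 3 * T ≤ N + 1) :
    ∑ t ∈ Finset.range (T + 1), N.choose t ≤ 2 * N.choose T := by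
  induction T with
  | zero => simp
  | succ T ih =>
    rw [Finset.sum_range_succ]
    have h1 := ih (by omega)
    have h2 : 2 * N.choose T ≤ N.choose (T + 1) := by
      have h3 := Nat.choose_succ_right_eq N T
      have h4 : N.choose T * (2 * (T + 1)) ≤ N.choose T * (N - T) :=
        Nat.mul_le_mul_left _ (by omega)
      refine Nat.le_of_mul_le_mul_right (c := T + 1) ?_ (by omega)
      linarith
    omega

lemma card_small_sets {α : Type} [Fintype α] [DecidableEq α] (F : Finset (Finset α))
    (hF : ∀ A ∈ F, 3 * A.card ≤ Fintype.card α) :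
    F.card ≤ 2 * (Fintype.card α).choose (Fintype.card α / 2) := by
  set N := Fintype.card α with hN
  calc F.card = ∑ t ∈ Finset.range (N / 3 + 1), (F.filter fun A => A.card = t).card := by
        apply Finset.card_eq_sum_card_fiberwise
        intro A hA
        have := hF A hA
        simp only [Finset.coe_range, Set.mem_Iio]
        omega
    _ ≤ ∑ t ∈ Finset.range (N / 3 + 1), N.choose t := by
        apply Finset.sum_le_sum
        intro t _
        rw [hN, ← Finset.card_univ, ← Finset.card_powersetCard]
        apply Finset.card_le_card
        intro A hA
        rw [Finset.mem_powersetCard]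
        exact ⟨Finset.subset_univ _, (Finset.mem_filter.1 hA).2⟩
    _ ≤ 2 * N.choose (N / 3) := sum_choose_le N _ (by omega)
    _ ≤ _ := Nat.mul_le_mul_left _ (Nat.choose_le_middle _ _)

lemma card_large_sets {α : Type} [Fintype α] [DecidableEq α] (F : Finset (Finset α))
    (hF : ∀ A ∈ F, 2 * Fintype.card α ≤ 3 * A.card) :
    F.card ≤ 2 * (Fintype.card α).choose (Fintype.card α / 2) := by
  rw [← Finset.card_image_of_injective F (compl_injective)]
  apply card_small_sets
  intro A hA
  obtain ⟨B, hB, rfl⟩ := Finset.mem_image.1 hA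
  have := hF B hB
  rw [Finset.card_compl]
  omega

/-- The number of permutations carrying `X` onto a given set of the same size does not depend on
that set, so it is `N!` divided by the number of such sets. -/
lemma card_perm_image {α : Type} [Fintype α] [DecidableEq α] (X A : Finset α)
    (h : X.card = A.card) :
    (Fintype.card α).factorial = (Fintype.card α).choose A.card *
      (Finset.univ.filter fun σ : Equiv.Perm α => X.map σ.toEmbedding = A).card := by
  have key : ∀ B ∈ Finset.powersetCard A.card (Finset.univ : Finset α),
      (Finset.univ.filter fun σ : Equiv.Perm α => X.map σ.toEmbedding = B).card =
      (Finset.univ.filter fun σ : Equiv.Perm α => X.map σ.toEmbedding = A).card := by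
    intro B hB
    have hBA : B.card = A.card := (Finset.mem_powersetCard.1 hB).2
    obtain ⟨τ, hτ⟩ : ∃ τ : Equiv.Perm α, B.map τ.toEmbedding = A := by
      let e : B ≃ A := Finset.equivOfCardEq hBA
      refine ⟨e.extendSubtype, ?_⟩
      apply Finset.eq_of_subset_of_card_le
      · intro x hx
        obtain ⟨b, hb, rfl⟩ := Finset.mem_map.1 hx
        exact e.extendSubtype_mem b hb
      · simp [hBA]
    have hτ' : ∀ C : Finset α, C.map τ.toEmbedding = A ↔ C = B := fun C => by
      rw [← hτ, Finset.map_inj]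
    apply Finset.card_bij (fun σ _ => σ.trans τ)
    · intro σ hσ
      simp only [Finset.mem_filter, Finset.mem_univ, true_and] at hσ ⊢
      rw [Equiv.trans_toEmbedding, ← Finset.map_map, hσ, hτ]
    · intro σ _ σ' _ h
      ext x
      simpa using Equiv.congr_fun h x
    · intro σ hσ
      simp only [Finset.mem_filter, Finset.mem_univ, true_and] at hσ ⊢
      refine ⟨σ.trans τ.symm, ?_, by ext; simp⟩
      rw [← hτ', Finset.map_map, ← Equiv.trans_toEmbedding]
      rw [← hσ]
      congr 1
      ext; simp
  rw [← Fintype.card_perm, ← Finset.card_univ,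
    Finset.card_eq_sum_card_fiberwise (f := fun σ : Equiv.Perm α => X.map σ.toEmbedding)
      (t := Finset.powersetCard A.card Finset.univ), Finset.sum_congr rfl key]
  · simp
  · intro σ _
    simp [h]

lemma choose_middle_le (n r : ℕ) :
    (n + r).choose ((n + r) / 2) ≤ 2 ^ r * n.choose (n / 2) := by
  induction r with
  | zero => simp
  | succ r ih =>
    have h : ∀ N t : ℕ, (N + 1).choose t ≤ 2 * N.choose (N / 2) := by
      intro N t
      cases t with
      | zero =>
        have := Nat.choose_pos (Nat.div_le_self N 2)
        simp; omega
      | succ t =>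
        rw [Nat.choose_succ_succ]
        have := Nat.choose_le_middle t N
        have := Nat.choose_le_middle (t + 1) N
        simp only [Nat.succ_eq_add_one]
        omega
    calc (n + (r + 1)).choose ((n + (r + 1)) / 2) ≤ 2 * (n + r).choose ((n + r) / 2) := h _ _
      _ ≤ 2 * (2 ^ r * n.choose (n / 2)) := Nat.mul_le_mul_left _ ih
      _ = _ := by ring

/-! ### Grids of sets -/

/-- The union of the initial segments of lengths `c i` of the columns `{i} × Fin m`. -/
def boxSet {d m : ℕ} (c : Fin d → ℕ) : Finset (Fin d × Fin m) :=
  Finset.univ.filter fun x => (x.2 : ℕ) < c x.1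

lemma card_boxSet {d m : ℕ} (c : Fin d → ℕ) (hc : ∀ i, c i ≤ m) :
    (boxSet c : Finset (Fin d × Fin m)).card = ∑ i, c i := by
  classical
  rw [Finset.card_eq_sum_card_fiberwise (f := Prod.fst) (t := Finset.univ)
    (fun _ _ => by simp)]
  refine Finset.sum_congr rfl fun i _ => ?_
  have : (boxSet c : Finset (Fin d × Fin m)).filter (fun x => x.1 = i) =
      (Finset.univ.filter fun y : Fin m => (y : ℕ) < c i).map
        ⟨fun y => (i, y), fun y z h => by simpa using h⟩ := by
    ext ⟨j, y⟩
    simp only [boxSet, Finset.mem_filter, Finset.mem_univ, true_and, Finset.mem_map]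
    constructor
    · rintro ⟨h, rfl⟩
      exact ⟨y, h, rfl⟩
    · rintro ⟨y', h, hy⟩
      cases hy
      exact ⟨h, rfl⟩
  rw [this, Finset.card_map, Fin.card_filter_val_lt, min_eq_right (hc i)]

lemma boxSet_subset_iff {d m : ℕ} (c c' : Fin d → ℕ) (hc : ∀ i, c i ≤ m) :
    (boxSet c : Finset (Fin d × Fin m)) ⊆ boxSet c' ↔ ∀ i, c i ≤ c' i := by
  constructor
  · intro h i
    by_contra hlt
    have hm := hc i
    have : (i, (⟨c' i, by omega⟩ : Fin m)) ∈ boxSet c' := h (by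
      simp only [boxSet, Finset.mem_filter, Finset.mem_univ, true_and]
      omega)
    simp [boxSet] at this
  · intro h x hx
    simp only [boxSet, Finset.mem_filter, Finset.mem_univ, true_and] at hx ⊢
    exact hx.trans_le (h _)

/-- Each level in the middle third of the grid `[0,m]^(e+1)` has at least `u^e` points: near the
average `t / (e + 1)`, all coordinates but one can be chosen freely from an interval of
length `u`. -/
lemma le_card_level (e u t m : ℕ) (hm : m = 6 * (e + 1) * u) (hu : 0 < u)
    (h1 : 2 * (e + 1) ^ 2 * u ≤ t)
    (h2 : t ≤ 4 * (e + 1) ^ 2 * u) :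
    u ^ e ≤ ((Fintype.piFinset fun _ : Fin (e + 1) =>
      Finset.range (m + 1)).filter fun c => ∑ i, c i = t).card := by
  classical
  subst hm
  set q := t / (e + 1) with hq
  have hqt : (e + 1) * q ≤ t := Nat.mul_div_le t (e + 1)
  have hqt' : t < (e + 1) * q + (e + 1) := Nat.lt_mul_div_succ t (Nat.succ_pos e)
  have hq1 : 2 * (e + 1) * u ≤ q := by
    rw [hq, Nat.le_div_iff_mul_le (by omega)]
    calc _ = 2 * (e + 1) ^ 2 * u := by ring
      _ ≤ t := h1
  have hq2 : q ≤ 4 * (e + 1) * u := by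
    refine Nat.div_le_of_le_mul (h2.trans (le_of_eq (by ring)))
  have hcard : (Fintype.piFinset fun _ : Fin e => Finset.range u).card = u ^ e := by simp
  rw [← hcard]
  have hsum : ∀ x ∈ Fintype.piFinset fun _ : Fin e => Finset.range u,
      ∑ i, x i ≤ e * u := by
    intro x hx
    refine (Finset.sum_le_card_nsmul _ _ u fun i _ => ?_).trans (by simp)
    exact (Finset.mem_range.1 (Fintype.mem_piFinset.1 hx i)).le
  have hshift : ∀ x : Fin e → ℕ, ∑ i, (q + x i) = e * q + ∑ i, x i := fun x => by
    simp [Finset.sum_add_distrib]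
  have hexp : (e + 1) * u = e * u + u := by ring
  have hexq : (e + 1) * q = e * q + q := by ring
  have heu : e + 1 ≤ (e + 1) * u := Nat.le_mul_of_pos_right _ hu
  rw [mul_assoc] at hq1 hq2
  apply Finset.card_le_card_of_injOn
    (fun x => Fin.cons (t - ∑ i, (q + x i)) fun i => q + x i)
  · intro x hx
    have hx' := hsum x hx
    have hs := hshift x
    simp only [Finset.coe_filter, Set.mem_ofPred_eq, Fintype.mem_piFinset, Finset.mem_range,
      mul_assoc 6]
    constructor
    · intro i
      refine Fin.cases ?_ (fun j => ?_) i
      · simp only [Fin.cons_zero]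
        omega
      · have := Finset.mem_range.1 (Fintype.mem_piFinset.1 hx j)
        simp only [Fin.cons_succ]
        omega
    · rw [Fin.sum_univ_succ]
      simp only [Fin.cons_zero, Fin.cons_succ]
      omega
  · intro x _ y _ h
    have := (Fin.cons_injective2 h).2
    funext i
    have := congrFun this i
    simpa using this

/-- Double counting of the pairs `(σ, c)` such that the permuted set `boxSet c` belongs to `F`. -/
lemma card_middle_le {e u m N K : ℕ} (hu : 0 < u) (hm : m = 6 * (e + 1) * u)
    (hN : N = 6 * (e + 1) ^ 2 * u) (F : Finset (Finset (Fin (e + 1) × Fin m)))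
    (hF1 : ∀ A ∈ F, N ≤ 3 * A.card) (hF2 : ∀ A ∈ F, 3 * A.card ≤ 2 * N)
    (hK : ∀ σ : Equiv.Perm (Fin (e + 1) × Fin m),
      ((Fintype.piFinset fun _ : Fin (e + 1) => Finset.range (m + 1)).filter
        fun c => (boxSet c).map σ.toEmbedding ∈ F).card ≤ K) :
    F.card * u ^ e ≤ K * N.choose (N / 2) := by
  classical
  set G := Fintype.piFinset fun _ : Fin (e + 1) => Finset.range (m + 1) with hG
  have hα : Fintype.card (Fin (e + 1) × Fin m) = N := by
    simp [hm, hN]; ring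
  have hcount : ∑ σ : Equiv.Perm (Fin (e + 1) × Fin m),
      (G.filter fun c => (boxSet c).map σ.toEmbedding ∈ F).card =
      ∑ A ∈ F, ∑ c ∈ G, (Finset.univ.filter fun σ : Equiv.Perm (Fin (e + 1) × Fin m) =>
        (boxSet c).map σ.toEmbedding = A).card := by
    simp only [Finset.card_filter]
    rw [Finset.sum_comm' (t' := G) (s' := fun _ => Finset.univ) (by simp)]
    rw [Finset.sum_comm (s := F)]
    refine Finset.sum_congr rfl fun c _ => ?_
    rw [Finset.sum_comm (s := F)]
    refine Finset.sum_congr rfl fun σ _ => ?_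
    simp
  have hlow : ∀ A ∈ F, u ^ e * N.factorial ≤
      (∑ c ∈ G, (Finset.univ.filter fun σ : Equiv.Perm (Fin (e + 1) × Fin m) =>
        (boxSet c).map σ.toEmbedding = A).card) * N.choose (N / 2) := by
    intro A hA
    have h1 := hF1 A hA
    have h2 := hF2 A hA
    rw [Finset.sum_mul]
    calc u ^ e * N.factorial
        ≤ (G.filter fun c => ∑ i, c i = A.card).card * N.factorial := by
          gcongr
          apply le_card_level e u A.card m hm hu
          · rw [hN, mul_assoc] at h1
            rw [mul_assoc]
            omega
          · rw [hN, mul_assoc] at h2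
            rw [mul_assoc]
            omega
      _ = ∑ c ∈ G.filter fun c => ∑ i, c i = A.card, N.factorial := by simp
      _ ≤ ∑ c ∈ G.filter fun c => ∑ i, c i = A.card,
            (Finset.univ.filter fun σ : Equiv.Perm (Fin (e + 1) × Fin m) =>
              (boxSet c).map σ.toEmbedding = A).card * N.choose (N / 2) := by
          apply Finset.sum_le_sum
          intro c hc
          obtain ⟨hcG, hcA⟩ := Finset.mem_filter.1 hc
          have hcm : ∀ i, c i ≤ m := fun i =>
            Nat.lt_succ_iff.1 (Finset.mem_range.1 (Fintype.mem_piFinset.1 hcG i))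
          have := card_perm_image (boxSet c) A ((card_boxSet c hcm).trans hcA)
          rw [hα] at this
          rw [this, mul_comm]
          gcongr
          exact Nat.choose_le_middle _ _
      _ ≤ _ := Finset.sum_le_sum_of_subset (Finset.filter_subset _ _)
  refine Nat.le_of_mul_le_mul_right (c := N.factorial) ?_ (Nat.factorial_pos N)
  calc F.card * u ^ e * N.factorial = ∑ A ∈ F, u ^ e * N.factorial := by
        simp [mul_assoc]
    _ ≤ ∑ A ∈ F, (∑ c ∈ G, (Finset.univ.filter
          fun σ : Equiv.Perm (Fin (e + 1) × Fin m) =>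
            (boxSet c).map σ.toEmbedding = A).card) * N.choose (N / 2) := Finset.sum_le_sum hlow
    _ = (∑ σ : Equiv.Perm (Fin (e + 1) × Fin m),
          (G.filter fun c => (boxSet c).map σ.toEmbedding ∈ F).card) * N.choose (N / 2) := by
        rw [hcount, Finset.sum_mul]
    _ ≤ (∑ σ : Equiv.Perm (Fin (e + 1) × Fin m), K) * N.choose (N / 2) := by
        gcongr with σ
        exact hK σ
    _ = K * N.choose (N / 2) * N.factorial := by
        rw [Finset.sum_const, Finset.card_univ, Fintype.card_perm, hα, smul_eq_mul]
        ring

/-- A pattern whose copies in a grid of sets are induced copies of `P`. The order of `P` is encoded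
as `α p ⊆ α q ↔ p ≤ q`. -/
lemma exists_pattern (P : Type) [PartialOrder P] [Fintype P] (e : ℕ)
    (he : Fintype.card P = e + 1) :
    ∃ π : P → Fin (e + 1) → ℕ, ∀ (m : ℕ) (σ : Equiv.Perm (Fin (e + 1) × Fin m))
      (A : Finset (Fin (e + 1) → ℕ)), (∀ a ∈ A, ∀ i, a i ≤ m) → HasPattern π A →
      ∃ α : P → Finset (Fin (e + 1) × Fin m),
        (∀ p, ∃ a ∈ A, α p = (boxSet a).map σ.toEmbedding) ∧ ∀ p q, α p ⊆ α q ↔ p ≤ q := by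
  obtain ⟨f, hinj, hmono, hsep⟩ := exists_linear_coords P
  let x : P ≃ Fin (e + 1) := Fintype.equivFinOfCardEq he
  refine ⟨fun p i => f (x.symm i) p, fun m σ A hA => ?_⟩
  rintro ⟨φ, hφ, hlt⟩
  refine ⟨fun p => (boxSet (φ p)).map σ.toEmbedding, fun p => ⟨φ p, hφ p, rfl⟩, fun p q => ?_⟩
  rw [Finset.map_subset_map, boxSet_subset_iff _ _ (hA _ (hφ p))]
  constructor
  · intro h
    by_contra hpq
    have h1 := hlt q p (x q) (by simpa using hsep q p hpq)
    exact absurd (h (x q)) (not_le.2 h1)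
  · intro h i
    rcases (hmono (x.symm i) p q h).eq_or_lt with heq | hl
    · rw [hinj _ heq]
    · exact (hlt p q i hl).le

/-! ### The bound for induced `P`-free families -/

/-- For every finite poset `P` there is a constant `C > 0` such that
for every `n`, every induced `P`-free family of subsets of `[n]` has size at most
`C * C(n, ⌊n/2⌋)`. -/
theorem stmt_0 (P : Type) [PartialOrder P] [Fintype P] :
    ∃ C : ℕ, 0 < C ∧ ∀ n : ℕ, ∀ F : Finset (Finset (Fin n)),
      ¬ ContainsInduced P F → F.card ≤ C * n.choose (n / 2) := by
  classical
  rcases isEmpty_or_nonempty P with hP | hP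
  · refine ⟨1, one_pos, fun n F hF => absurd ?_ hF⟩
    exact ⟨fun p => isEmptyElim p, fun p => isEmptyElim p, fun p => isEmptyElim p,
      fun p => isEmptyElim p⟩
  obtain ⟨e, he⟩ : ∃ e, Fintype.card P = e + 1 :=
    ⟨Fintype.card P - 1, by have := Fintype.card_pos (α := P); omega⟩
  obtain ⟨π, hπ⟩ := exists_pattern P e he
  obtain ⟨C, hC⟩ := card_le_of_not_hasPattern P e
  set R := 6 * (e + 1) ^ 2 with hR
  have hRpos : 0 < R := by positivity
  refine ⟨(4 + C * (7 * (e + 1)) ^ e) * 2 ^ R, by positivity, fun n F hF => ?_⟩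
  set u := n / R + 1 with hu
  have hupos : 0 < u := Nat.succ_pos _
  set m := 6 * (e + 1) * u with hm
  have hα : Fintype.card (Fin (e + 1) × Fin m) = R * u := by
    simp [hm, hR]; ring
  have hn1 : n ≤ R * u := (Nat.lt_mul_div_succ n hRpos).le
  have hn2 : R * u ≤ n + R := by
    have := Nat.mul_div_le n R
    rw [hu, mul_add]
    omega
  obtain ⟨ε⟩ : Nonempty (Fin n ↪ Fin (e + 1) × Fin m) :=
    Function.Embedding.nonempty_of_card_le (by rw [hα]; simpa using hn1)
  set F' : Finset (Finset (Fin (e + 1) × Fin m)) := F.map (Finset.mapEmbedding ε).toEmbedding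
    with hF'
  set M := (R * u).choose (R * u / 2) with hM
  have hgrid : ∀ σ : Equiv.Perm (Fin (e + 1) × Fin m),
      ((Fintype.piFinset fun _ : Fin (e + 1) => Finset.range (m + 1)).filter
        fun c => (boxSet c).map σ.toEmbedding ∈ F').card ≤ C * (m + 1) ^ e := by
    intro σ
    have hbound : ∀ a ∈ (Fintype.piFinset fun _ : Fin (e + 1) => Finset.range (m + 1)).filter
        fun c => (boxSet c).map σ.toEmbedding ∈ F', ∀ i, a i < m + 1 := fun a ha i =>
      Finset.mem_range.1 (Fintype.mem_piFinset.1 (Finset.mem_filter.1 ha).1 i)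
    apply hC π (m + 1) _ (Nat.succ_pos m) hbound
    intro hpat
    obtain ⟨α, hα1, hα2⟩ := hπ m σ _ (fun a ha i => Nat.lt_succ_iff.1 (hbound a ha i)) hpat
    have hmem : ∀ p, ∃ B ∈ F, B.map ε = α p := by
      intro p
      obtain ⟨a, ha, hap⟩ := hα1 p
      have := (Finset.mem_filter.1 ha).2
      rw [← hap] at this
      simpa [hF'] using this
    choose β hβF hβ using hmem
    have hle : ∀ p q, β p ⊆ β q ↔ p ≤ q := fun p q => by
      rw [← hα2, ← hβ, ← hβ, Finset.map_subset_map]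
    refine hF ⟨β, fun p q hpq => ?_, hβF, fun p q => ?_⟩
    · exact le_antisymm ((hle p q).1 hpq.subset) ((hle q p).1 hpq.symm.subset)
    · rw [lt_iff_le_not_ge, Finset.ssubset_iff_subset_ne, ← hle, ← hle]
      constructor
      · rintro ⟨h1, h2⟩
        exact ⟨h1, fun h => h2 h.symm.subset⟩
      · rintro ⟨h1, h2⟩
        exact ⟨h1, fun h => h2 (h1.antisymm h)⟩
  have hmid : (F'.filter fun A => R * u ≤ 3 * A.card ∧ 3 * A.card ≤ 2 * (R * u)).card ≤
      C * (7 * (e + 1)) ^ e * M := by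
    have h1 := card_middle_le (K := C * (m + 1) ^ e) hupos hm rfl
      (F'.filter fun A => R * u ≤ 3 * A.card ∧ 3 * A.card ≤ 2 * (R * u))
      (fun A hA => (Finset.mem_filter.1 hA).2.1) (fun A hA => (Finset.mem_filter.1 hA).2.2)
      (fun σ => (Finset.card_le_card (Finset.monotone_filter_right _
        fun c _ hc => (Finset.mem_filter.1 hc).1)).trans (hgrid σ))
    have h2 : m + 1 ≤ 7 * (e + 1) * u := by
      have : 1 ≤ (e + 1) * u := Nat.mul_pos (Nat.succ_pos e) hupos
      rw [hm, mul_assoc, mul_assoc]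
      omega
    refine Nat.le_of_mul_le_mul_right (c := u ^ e) ?_ (by positivity)
    calc _ ≤ C * (m + 1) ^ e * M := h1
      _ ≤ C * (7 * (e + 1) * u) ^ e * M := by gcongr
      _ = _ := by rw [mul_pow]; ring
  have hsmall := card_small_sets (F'.filter fun A => 3 * A.card ≤ R * u)
    (fun A hA => by rw [hα]; exact (Finset.mem_filter.1 hA).2)
  have hlarge := card_large_sets (F'.filter fun A => 2 * (R * u) ≤ 3 * A.card)
    (fun A hA => by rw [hα]; exact (Finset.mem_filter.1 hA).2)
  rw [hα, ← hM] at hsmall hlarge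
  have hsplit : F' ⊆ (F'.filter fun A => R * u ≤ 3 * A.card ∧ 3 * A.card ≤ 2 * (R * u)) ∪
      ((F'.filter fun A => 3 * A.card ≤ R * u) ∪
        (F'.filter fun A => 2 * (R * u) ≤ 3 * A.card)) := by
    intro A hA
    simp only [Finset.mem_union, Finset.mem_filter, hA, true_and]
    omega
  have hMn : M ≤ 2 ^ R * n.choose (n / 2) := by
    obtain ⟨r, hr⟩ := Nat.exists_eq_add_of_le hn1
    have hrR : r ≤ R := by omega
    rw [hM, hr]
    refine (choose_middle_le n r).trans ?_
    gcongr
    exact one_le_two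
  calc F.card = F'.card := (Finset.card_map _).symm
    _ ≤ _ := (Finset.card_le_card hsplit).trans ((Finset.card_union_le _ _).trans
        (Nat.add_le_add_left (Finset.card_union_le _ _) _))
    _ ≤ C * (7 * (e + 1)) ^ e * M + (2 * M + 2 * M) :=
        Nat.add_le_add hmid (Nat.add_le_add hsmall hlarge)
    _ = (4 + C * (7 * (e + 1)) ^ e) * M := by ring
    _ ≤ (4 + C * (7 * (e + 1)) ^ e) * (2 ^ R * n.choose (n / 2)) := Nat.mul_le_mul_left _ hMn
    _ = _ := by ring
end

section
/- Let P be a finite poset on k elements of dimension at most d, where d ≥ 2. Then there exists a permutation d-matrix M_P of size k^d such that for every real K ≥ 0 the following holds: if for every n every M_P-free d-matrix of size n×⋯×n has at most K·n^{d−1} one-entries, then for every n, La#(n,P) ≤ 2^d · K · C(n, ⌊n/2⌋). -/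
/-!
The matrix `M_P` has a `1` at the vector of ranks of `p` in the `d` linear orders, for each `p`.

Split the ground set into `d` ordered parts of sizes `q j`, each `n / d` or `n / d + 1`, and consider
the sets that meet every part in an initial segment. They form a grid indexed by the product of the
chains `{0, …, q j}`, and inclusion between them is the coordinatewise order. Hence if `F` is induced
`P`-free, the 0-1 matrix recording which grid sets lie in `F` is `M_P`-free
(`containsInduced_of_matContains`), also after permuting the ground set, and it has at most
`K * s ^ (d - 1)` ones, where `s = n / d + 2`. Averaging over all permutations gives
(`sum_ones_gridMatrix`)
`∑ A ∈ F, N |A| / n.choose |A| ≤ K * s ^ (d - 1)`,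
where `N m` is the number of grid points with coordinate sum `m`.

The ratio `N m / n.choose m` is minimal at `m = n / 2` (`levelCount_div_choose`). Indeed
`(n - m) N m - (m + 1) N (m + 1)` is the coefficient of `X ^ m` in `n p - (1 + X) p'`, where
`p = ∏ (1 + X + ⋯ + X ^ q j)`; this operation obeys a Leibniz rule, and the coefficient sequences
that are antisymmetric about a centre and nonnegative before it are preserved by multiplication by
`1 + X + ⋯ + X ^ q` (`AntiNonneg.mul_block`). Applied to `(1 - X) p`, the same fact shows that `N` is
largest at `n / 2`, so `N (n / 2) ≥ ∏ (q j + 1) / (n + 1)`. The theorem follows from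
`s ^ (d - 1) * (n + 1) ≤ 2 ^ d * ∏ (q j + 1)` (`exists_sizes`).
-/

/-- Number of 1-entries of a 0-1 hypermatrix. -/
def ones {ι : Type*} [Fintype ι] [DecidableEq ι] {nn : ι → ℕ}
    (M : (∀ j, Fin (nn j)) → Bool) : ℕ :=
  (Finset.univ.filter fun i => M i = true).card

/-- The hypermatrix `M` contains the hypermatrix `A`: there are strictly increasing
maps, one for each coordinate, sending 1-entries of `A` to 1-entries of `M`. -/
def MatContains {ι : Type*} {kk nn : ι → ℕ}
    (M : (∀ j, Fin (nn j)) → Bool) (A : (∀ j, Fin (kk j)) → Bool) : Prop :=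
  ∃ f : ∀ j, Fin (kk j) → Fin (nn j), (∀ j, StrictMono (f j)) ∧
    ∀ i, A i = true → M (fun j => f j (i j)) = true

/-- A permutation d-matrix of size k^d: exactly `k` ones, and for each coordinate
direction `j` and each value `v` there is exactly one 1-entry with j-th coordinate `v`. -/
def IsPermMatrix {d k : ℕ} (A : (Fin d → Fin k) → Bool) : Prop :=
  (Finset.univ.filter fun i => A i = true).card = k ∧
    ∀ (j : Fin d) (v : Fin k), ∃! i : Fin d → Fin k, A i = true ∧ i j = v

open Polynomial

/-! ### Antisymmetric coefficient sequences -/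

/-- The coefficients of `p`, extended by zero to negative indices. -/
noncomputable def coeffZ (p : ℤ[X]) (m : ℤ) : ℤ := if m < 0 then 0 else p.coeff m.toNat

/-- `1 + X + ⋯ + X ^ q`, the rank generating function of a chain with `q + 1` elements. -/
noncomputable def block (q : ℕ) : ℤ[X] := ∑ a ∈ Finset.range (q + 1), X ^ a

/-- The coefficient sequence of `p` is antisymmetric about `c / 2` and nonnegative up to `c / 2`.
The centre is an integer parameter so that `c = -1`, which occurs for empty products, is covered. -/
structure AntiNonneg (c : ℤ) (p : ℤ[X]) : Prop where
  anti : ∀ m, coeffZ p (c - m) = -coeffZ p m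
  nonneg : ∀ m, 2 * m ≤ c → 0 ≤ coeffZ p m

lemma coeffZ_natCast (p : ℤ[X]) (m : ℕ) : coeffZ p m = p.coeff m := by simp [coeffZ]

lemma coeffZ_add (p r : ℤ[X]) (m : ℤ) : coeffZ (p + r) m = coeffZ p m + coeffZ r m := by
  unfold coeffZ; split_ifs <;> simp

lemma coeffZ_mul_block (p : ℤ[X]) (q : ℕ) (m : ℤ) :
    coeffZ (p * block q) m = ∑ a ∈ Finset.range (q + 1), coeffZ p (m - a) := by
  unfold coeffZ block
  rw [Finset.mul_sum, finsetSum_coeff]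
  split_ifs with h
  · refine (Finset.sum_eq_zero fun a _ => if_pos (by omega)).symm
  · refine Finset.sum_congr rfl fun a _ => ?_
    rw [coeff_mul_X_pow']
    by_cases ha : a ≤ m.toNat
    · rw [if_pos ha, if_neg (by omega)]; congr 1; omega
    · rw [if_neg ha, if_pos (by omega)]

lemma AntiNonneg.add {c : ℤ} {p r : ℤ[X]} (hp : AntiNonneg c p) (hr : AntiNonneg c r) :
    AntiNonneg c (p + r) where
  anti m := by rw [coeffZ_add, coeffZ_add, hp.anti, hr.anti]; ring
  nonneg m hm := by rw [coeffZ_add]; exact add_nonneg (hp.nonneg m hm) (hr.nonneg m hm)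

lemma sum_window_reflect {c : ℤ} {p : ℤ[X]} (hp : AntiNonneg c p) (m : ℤ) (t : ℕ) :
    ∑ a ∈ Finset.range (t + 1), coeffZ p (c + t - m - a)
      = -∑ a ∈ Finset.range (t + 1), coeffZ p (m - a) := by
  rw [← Finset.sum_range_reflect, ← Finset.sum_neg_distrib]
  refine Finset.sum_congr rfl fun a ha => ?_
  rw [← hp.anti]
  congr 1
  have := Finset.mem_range.1 ha
  omega

/-- Multiplication by `block q` replaces the coefficients by sums over windows of length `q + 1`.
The part of a window that is symmetric about `c / 2` cancels, and for windows centred at or below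
`c / 2` the rest lies where the coefficients are nonnegative. -/
lemma AntiNonneg.mul_block {c : ℤ} {p : ℤ[X]} (hp : AntiNonneg c p) (q : ℕ) :
    AntiNonneg (c + q) (p * block q) where
  anti m := by rw [coeffZ_mul_block, coeffZ_mul_block, sum_window_reflect hp]
  nonneg m hm := by
    rw [coeffZ_mul_block]
    by_cases h : 2 * m ≤ c
    · exact Finset.sum_nonneg fun a _ => hp.nonneg _ (by omega)
    -- the terms `0 ≤ a ≤ t` form the window symmetric about `c / 2`
    · obtain ⟨t, ht⟩ : ∃ t : ℕ, (t : ℤ) = 2 * m - c := ⟨(2 * m - c).toNat, by omega⟩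
      obtain ⟨u, rfl⟩ : ∃ u, q = t + u := ⟨q - t, by omega⟩
      rw [show t + u + 1 = t + 1 + u by omega, Finset.sum_range_add]
      have h0 := sum_window_reflect hp m t
      rw [show c + t - m = m by omega] at h0
      have h1 : 0 ≤ ∑ x ∈ Finset.range u, coeffZ p (m - (t + 1 + x : ℕ)) :=
        Finset.sum_nonneg fun a _ => hp.nonneg _ (by push_cast; omega)
      linarith

lemma AntiNonneg.mul_prod {ι : Type*} {c : ℤ} {p : ℤ[X]} (hp : AntiNonneg c p)
    (q : ι → ℕ) (S : Finset ι) :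
    AntiNonneg (c + ∑ j ∈ S, (q j : ℤ)) (p * ∏ j ∈ S, block (q j)) := by
  classical
  induction S using Finset.induction_on with
  | empty => simpa using hp
  | insert a S ha ih =>
    have := ih.mul_block (q a)
    rw [Finset.sum_insert ha, Finset.prod_insert ha]
    convert this using 1 <;> ring

/-! ### Level sizes of a product of chains -/

/-- `n p - (1 + X) p'`. Its coefficient of `X ^ m` is `(n - m) p_m - (m + 1) p_{m+1}`, whose sign
says whether `p_m / n.choose m` decreases or increases from `m` to `m + 1`. It satisfies the Leibniz
rule `lymDefect (n + n') (p * r) = lymDefect n p * r + p * lymDefect n' r`. -/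
noncomputable def lymDefect (n : ℤ) (p : ℤ[X]) : ℤ[X] := C n * p - (1 + X) * derivative p

lemma lymDefect_coeff (n : ℤ) (p : ℤ[X]) (m : ℕ) :
    (lymDefect n p).coeff m = (n - m) * p.coeff m - (m + 1) * p.coeff (m + 1) := by
  unfold lymDefect
  rw [add_mul, one_mul, coeff_sub, coeff_C_mul, coeff_add, coeff_derivative]
  cases m with
  | zero => simp
  | succ m => rw [coeff_X_mul, coeff_derivative]; push_cast; ring

lemma block_coeff (q m : ℕ) : (block q).coeff m = if m ≤ q then 1 else 0 := by
  simp [block, coeff_X_pow]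

lemma lymDefect_block (q : ℕ) : AntiNonneg (q - 1) (lymDefect q (block q)) := by
  have key : ∀ m : ℤ, coeffZ (lymDefect q (block q)) m
      = if 0 ≤ m ∧ m + 1 ≤ q then q - 1 - 2 * m else 0 := by
    intro m
    unfold coeffZ
    by_cases h : m < 0
    · rw [if_pos h, if_neg (by omega)]
    · obtain ⟨k, rfl⟩ := Int.eq_ofNat_of_zero_le (not_lt.1 h)
      rw [if_neg h, lymDefect_coeff, block_coeff, block_coeff]
      simp only [Int.toNat_natCast]
      split_ifs <;> omega
  constructor
  · intro m; rw [key, key]; split_ifs <;> omega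
  · intro m hm; rw [key]; split_ifs <;> omega

lemma lymDefect_prod {ι : Type*} (q : ι → ℕ) (S : Finset ι) :
    AntiNonneg ((∑ j ∈ S, (q j : ℤ)) - 1)
      (lymDefect (∑ j ∈ S, (q j : ℤ)) (∏ j ∈ S, block (q j))) := by
  classical
  induction S using Finset.induction_on with
  | empty => constructor <;> simp [lymDefect, coeffZ]
  | insert a S ha ih =>
    rw [Finset.sum_insert ha, Finset.prod_insert ha]
    have h1 := ih.mul_block (q a)
    have h2 := (lymDefect_block (q a)).mul_prod q S
    rw [show (∑ j ∈ S, (q j : ℤ)) - 1 + q a = q a - 1 + ∑ j ∈ S, (q j : ℤ) by ring] at h1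
    convert h1.add h2 using 1
    · ring
    · unfold lymDefect
      rw [derivative_mul, C_add]; ring

lemma antiNonneg_one_sub_X : AntiNonneg 1 (1 - X) := by
  have key : ∀ m : ℤ, coeffZ (1 - X) m = if m = 0 then 1 else if m = 1 then -1 else 0 := by
    intro m
    unfold coeffZ
    by_cases h : m < 0
    · rw [if_pos h, if_neg (by omega), if_neg (by omega)]
    · obtain ⟨k, rfl⟩ := Int.eq_ofNat_of_zero_le (not_lt.1 h)
      rw [if_neg h]
      simp only [Int.toNat_natCast, coeff_sub, coeff_one, coeff_X]
      split_ifs <;> omega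
  constructor
  · intro m; rw [key, key]; split_ifs <;> omega
  · intro m hm; rw [key]; split_ifs <;> omega

/-- The product of the chains `{0, …, q j}`. -/
def box {d : ℕ} (q : Fin d → ℕ) : Finset (Fin d → ℕ) :=
  Fintype.piFinset fun j => Finset.range (q j + 1)

/-- The number of elements of rank `m` in the product of the chains `{0, …, q j}`. -/
def levelCount {d : ℕ} (q : Fin d → ℕ) (m : ℕ) : ℕ :=
  ((box q).filter fun i => ∑ j, i j = m).card

lemma coeff_prod_block {d : ℕ} (q : Fin d → ℕ) (m : ℕ) :
    (∏ j, block (q j)).coeff m = levelCount q m := by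
  unfold block levelCount box
  rw [Finset.prod_univ_sum, finsetSum_coeff, Finset.card_filter]
  push_cast
  refine Finset.sum_congr rfl fun i _ => ?_
  rw [Finset.prod_pow_eq_pow_sum, coeff_X_pow]
  simp [eq_comm]

/-- A function decreasing up to `h` and increasing from `h` to `n` is minimal at `h`. -/
lemma le_of_valley {α : Type*} [Preorder α] (f : ℕ → α) (h n : ℕ)
    (h1 : ∀ m, m < h → f (m + 1) ≤ f m) (h2 : ∀ m, h ≤ m → m < n → f m ≤ f (m + 1))
    (m : ℕ) (hm : m ≤ n) : f h ≤ f m := by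
  rcases le_total h m with hh | hh
  · induction m, hh using Nat.le_induction with
    | base => exact le_rfl
    | succ m hhm ih => exact (ih (by omega)).trans (h2 m hhm (by omega))
  · have : ∀ e, e ≤ h → f h ≤ f (h - e) := by
      intro e
      induction e with
      | zero => intro _; exact le_rfl
      | succ e ih =>
        intro he
        have := h1 (h - (e + 1)) (by omega)
        rw [show h - (e + 1) + 1 = h - e by omega] at this
        exact (ih (by omega)).trans this
    simpa [Nat.sub_sub_self hh] using this (h - m) (by omega)

/-- The middle level is a largest one: `(1 - X) * ∏ block (q j)` is `AntiNonneg`. -/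
lemma levelCount_le_mid {d n : ℕ} (q : Fin d → ℕ) (hn : ∑ j, q j = n)
    (m : ℕ) (hm : m ≤ n) : levelCount q m ≤ levelCount q (n / 2) := by
  have hA := antiNonneg_one_sub_X.mul_prod q Finset.univ
  have hs : (∑ j, (q j : ℤ)) = n := by rw [← hn]; push_cast; rfl
  rw [hs] at hA
  have hc : ∀ m : ℕ, coeffZ ((1 - X) * ∏ j, block (q j)) ((m + 1 : ℕ) : ℤ)
      = levelCount q (m + 1) - levelCount q m := by
    intro m
    rw [coeffZ_natCast, sub_mul, one_mul, coeff_sub, coeff_X_mul, coeff_prod_block,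
      coeff_prod_block]
  refine le_of_valley (α := ℕᵒᵈ) (fun m => OrderDual.toDual (levelCount q m)) (n / 2) n ?_ ?_ m hm
  · intro m hm
    have := hA.nonneg (m + 1 : ℕ) (by push_cast; omega)
    rw [hc] at this
    exact OrderDual.toDual_le_toDual.2 (by omega)
  · intro m hm hmn
    have := hA.nonneg (1 + n - (m + 1 : ℕ)) (by push_cast; omega)
    rw [hA.anti, hc] at this
    exact OrderDual.toDual_le_toDual.2 (by omega)

/-- The ratio of the level sizes of a product of chains to those of the Boolean lattice of the same
rank is smallest in the middle: the defect of `∏ block (q j)` is `AntiNonneg`. -/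
lemma levelCount_div_choose {d n : ℕ} (q : Fin d → ℕ) (hn : ∑ j, q j = n)
    (m : ℕ) (hm : m ≤ n) :
    (levelCount q (n / 2) : ℝ) / n.choose (n / 2) ≤ levelCount q m / n.choose m := by
  have hA := lymDefect_prod q Finset.univ
  have hs : (∑ j, (q j : ℤ)) = n := by rw [← hn]; push_cast; rfl
  rw [hs] at hA
  have hc : ∀ m : ℕ, coeffZ (lymDefect n (∏ j, block (q j))) m
      = (n - m) * levelCount q m - (m + 1) * levelCount q (m + 1) := by
    intro m
    rw [coeffZ_natCast, lymDefect_coeff, coeff_prod_block, coeff_prod_block]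
  have hch : ∀ m, m < n → (n.choose (m + 1) : ℝ) * (m + 1) = n.choose m * (n - m) := by
    intro m hm
    have := Nat.choose_succ_right_eq n m
    have h2 : ((n - m : ℕ) : ℝ) = n - m := by push_cast [hm.le]; rfl
    rw [← h2]; exact_mod_cast this
  have hpos : ∀ m, m ≤ n → (0 : ℝ) < n.choose m := fun m hm => by
    exact_mod_cast Nat.choose_pos hm
  refine le_of_valley (fun m => (levelCount q m : ℝ) / n.choose m) (n / 2) n ?_ ?_ m hm
  · intro m hm
    have := hA.nonneg m (by omega)
    rw [hc] at this
    have h3 : ((m : ℝ) + 1) * levelCount q (m + 1) ≤ (n - m) * levelCount q m := by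
      exact_mod_cast (sub_nonneg.1 this)
    have hmn : m < n := by omega
    rw [div_le_div_iff₀ (hpos _ hmn) (hpos _ hmn.le)]
    have hm1 : (0 : ℝ) < m + 1 := by positivity
    refine le_of_mul_le_mul_right ?_ hm1
    have := mul_le_mul_of_nonneg_right h3 (hpos m hmn.le).le
    have h4 := hch m hmn
    calc _ = ((m : ℝ) + 1) * levelCount q (m + 1) * n.choose m := by ring
      _ ≤ _ := this
      _ = levelCount q m * (n.choose m * (n - m)) := by ring
      _ = _ := by rw [← h4]; ring
  · intro m hm hmn
    have := hA.nonneg (n - 1 - m) (by omega)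
    rw [hA.anti, hc] at this
    have h3 : ((n : ℝ) - m) * levelCount q m ≤ (m + 1) * levelCount q (m + 1) := by
      have : ((n : ℤ) - m) * levelCount q m ≤ (m + 1) * levelCount q (m + 1) := by linarith
      exact_mod_cast this
    rw [div_le_div_iff₀ (hpos _ hmn.le) (hpos _ hmn)]
    have hm1 : (0 : ℝ) < m + 1 := by positivity
    refine le_of_mul_le_mul_right ?_ hm1
    have := mul_le_mul_of_nonneg_right h3 (hpos m hmn.le).le
    have h4 := hch m hmn
    calc _ = levelCount q m * (n.choose (m + 1) * ((m : ℝ) + 1)) := by ring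
      _ = (n - m) * levelCount q m * n.choose m := by rw [h4]; ring
      _ ≤ _ := this
      _ = _ := by ring

lemma prod_le_levelCount_mid {d n : ℕ} (q : Fin d → ℕ) (hn : ∑ j, q j = n) :
    ∏ j, (q j + 1) ≤ (n + 1) * levelCount q (n / 2) := by
  have h1 : (box q).card = ∏ j, (q j + 1) := by simp [box]
  have h2 : ∀ i ∈ box q, ∑ j, i j ∈ Finset.range (n + 1) := by
    intro i hi
    simp only [box, Fintype.mem_piFinset, Finset.mem_range] at hi ⊢
    rw [← hn]
    exact Nat.lt_succ_of_le (Finset.sum_le_sum fun j _ => Nat.lt_succ_iff.1 (hi j))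
  rw [← h1, Finset.card_eq_sum_card_fiberwise h2]
  refine (Finset.sum_le_card_nsmul _ _ (levelCount q (n / 2)) fun m hm => ?_).trans (by simp)
  exact levelCount_le_mid q hn m (by simpa [Nat.lt_succ_iff] using hm)

/-! ### Nearly equal part sizes -/

lemma pow_bound_base (q d : ℕ) (hd : 2 ≤ d) :
    (q + 2) ^ (d - 1) * (d * q + 1) ≤ 2 ^ d * (q + 1) ^ d := by
  induction d, hd using Nat.le_induction with
  | base => simp; nlinarith
  | succ d hd ih =>
    have e : (q + 2) ^ (d + 1 - 1) = (q + 2) ^ (d - 1) * (q + 2) := by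
      rw [← pow_succ]; congr 1; omega
    have h : (q + 2) * ((d + 1) * q + 1) ≤ 2 * (q + 1) * (d * q + 1) := by
      obtain ⟨b, hb⟩ : ∃ b, d = b + 2 := ⟨d - 2, by omega⟩
      have hq : q ≤ q * q := Nat.le_mul_self q
      rw [hb]
      nlinarith [Nat.zero_le (b * q * q)]
    have hpos : 0 < d * q + 1 := by positivity
    refine Nat.le_of_mul_le_mul_right ?_ hpos
    calc _ = ((q + 2) ^ (d - 1) * (d * q + 1)) * ((q + 2) * ((d + 1) * q + 1)) := by rw [e]; ring
      _ ≤ (2 ^ d * (q + 1) ^ d) * (2 * (q + 1) * (d * q + 1)) := Nat.mul_le_mul ih h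
      _ = _ := by ring

lemma pow_bound (q d r : ℕ) (hd : 2 ≤ d) (hr : r ≤ d) :
    (q + 2) ^ (d - 1) * (d * q + r + 1) ≤ 2 ^ d * ((q + 2) ^ r * (q + 1) ^ (d - r)) := by
  induction r with
  | zero => simpa using pow_bound_base q d hd
  | succ r ih =>
    have ih := ih (by omega)
    have e : (q + 1) ^ (d - r) = (q + 1) ^ (d - (r + 1)) * (q + 1) := by
      rw [← pow_succ]; congr 1; omega
    rw [e] at ih
    have h : (q + 1) * (d * q + (r + 1) + 1) ≤ (q + 2) * (d * q + r + 1) := by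
      have : q ≤ d * q := Nat.le_mul_of_pos_left _ (by omega)
      nlinarith
    refine Nat.le_of_mul_le_mul_right ?_ (Nat.succ_pos q)
    calc _ = (q + 2) ^ (d - 1) * ((q + 1) * (d * q + (r + 1) + 1)) := by
            simp only [Nat.succ_eq_add_one]; ring
      _ ≤ (q + 2) ^ (d - 1) * ((q + 2) * (d * q + r + 1)) := Nat.mul_le_mul_left _ h
      _ = (q + 2) * ((q + 2) ^ (d - 1) * (d * q + r + 1)) := by ring
      _ ≤ (q + 2) * _ := Nat.mul_le_mul_left _ ih
      _ = _ := by simp only [Nat.succ_eq_add_one]; ring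

/-- Split `n` into `d` parts of sizes `n / d` and `n / d + 1`, with `s = n / d + 2`. -/
lemma exists_sizes (d n : ℕ) (hd : 2 ≤ d) : ∃ (s : ℕ) (q : Fin d → ℕ), (∀ j, q j < s) ∧
    ∑ j, q j = n ∧ s ^ (d - 1) * (n + 1) ≤ 2 ^ d * ∏ j, (q j + 1) := by
  have hdm := Nat.div_add_mod n d
  have hr : n % d < d := Nat.mod_lt _ (by omega)
  set Q := n / d
  set r := n % d
  have hcard : (Finset.univ.filter fun j : Fin d => (j : ℕ) < r).card = r := by
    rw [Fin.card_filter_val_lt]; omega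
  have hcard' : (Finset.univ.filter fun j : Fin d => ¬ (j : ℕ) < r).card = d - r := by
    have := Finset.card_filter_add_card_filter_not (s := (Finset.univ : Finset (Fin d)))
      (fun j : Fin d => (j : ℕ) < r)
    simp only [Finset.card_univ, Fintype.card_fin] at this
    omega
  refine ⟨Q + 2, fun j => if (j : ℕ) < r then Q + 1 else Q, ?_, ?_, ?_⟩
  · intro j; dsimp only; split_ifs <;> omega
  · rw [Finset.sum_ite, Finset.sum_const, Finset.sum_const, hcard, hcard', ← hdm]
    obtain ⟨e, he⟩ : ∃ e, d = r + e := ⟨d - r, by omega⟩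
    simp only [smul_eq_mul]
    rw [show d - r = e by omega]
    rw [he]; ring
  · have : ∏ j : Fin d, ((if (j : ℕ) < r then Q + 1 else Q) + 1)
        = (Q + 2) ^ r * (Q + 1) ^ (d - r) := by
      rw [← hcard', ← Finset.prod_const]
      conv_rhs => rw [← hcard, ← Finset.prod_const]
      rw [hcard, ← Finset.prod_ite]
      refine Finset.prod_congr rfl fun j _ => ?_
      split_ifs <;> rfl
    rw [this, ← hdm]
    exact pow_bound Q d r hd hr.le

/-! ### Averaging over permutations of the ground set -/

lemma exists_perm_map_eq {n : ℕ} (A B : Finset (Fin n)) (h : A.card = B.card) :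
    ∃ τ : Equiv.Perm (Fin n), A.map τ.toEmbedding = B := by
  let e : {x // x ∈ A} ≃ {x // x ∈ B} := Finset.equivOfCardEq h
  refine ⟨e.extendSubtype, Finset.eq_of_subset_of_card_le ?_ (by simp [h])⟩
  intro y hy
  obtain ⟨x, hx, rfl⟩ := Finset.mem_map.1 hy
  exact e.extendSubtype_mem x hx

/-- The `n!` permutations distribute the images of `g` evenly over the sets of size `|g|`. -/
lemma card_perm_map_eq {n : ℕ} (g A : Finset (Fin n)) (h : A.card = g.card) :
    (Finset.univ.filter fun σ : Equiv.Perm (Fin n) => g.map σ.toEmbedding = A).card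
      * n.choose g.card = n.factorial := by
  have hconst : ∀ B : Finset (Fin n), B.card = g.card →
      (Finset.univ.filter fun σ : Equiv.Perm (Fin n) => g.map σ.toEmbedding = B).card
      = (Finset.univ.filter fun σ : Equiv.Perm (Fin n) => g.map σ.toEmbedding = A).card := by
    intro B hB
    obtain ⟨τ, hτ⟩ := exists_perm_map_eq A B (h.trans hB.symm)
    symm
    refine Finset.card_equiv (Equiv.mulLeft τ) fun σ => ?_
    have : g.map (τ * σ).toEmbedding = (g.map σ.toEmbedding).map τ.toEmbedding := by
      rw [Finset.map_map]; rfl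
    simp only [Finset.mem_filter, Finset.mem_univ, true_and, Equiv.coe_mulLeft]
    rw [this, ← hτ]
    exact (Finset.map_injective _).eq_iff.symm
  have h1 : ∀ σ ∈ (Finset.univ : Finset (Equiv.Perm (Fin n))),
      g.map σ.toEmbedding ∈ Finset.powersetCard g.card (Finset.univ : Finset (Fin n)) := by
    intro σ _
    simp [Finset.mem_powersetCard]
  have h2 := Finset.card_eq_sum_card_fiberwise h1
  rw [Finset.sum_congr rfl fun B hB => hconst B (Finset.mem_powersetCard.1 hB).2] at h2
  simp only [Finset.sum_const, Finset.card_powersetCard, Finset.card_univ, Fintype.card_fin,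
    Fintype.card_perm, smul_eq_mul] at h2
  rw [h2, mul_comm]

lemma card_perm_map_mem {n : ℕ} (g : Finset (Fin n)) (F : Finset (Finset (Fin n))) :
    ((Finset.univ.filter fun σ : Equiv.Perm (Fin n) => g.map σ.toEmbedding ∈ F).card : ℝ)
      = ∑ A ∈ F, if g.card = A.card then (n.factorial : ℝ) / n.choose A.card else 0 := by
  have h1 : ∀ σ ∈ Finset.univ.filter fun σ : Equiv.Perm (Fin n) => g.map σ.toEmbedding ∈ F,
      g.map σ.toEmbedding ∈ F := fun σ hσ => (Finset.mem_filter.1 hσ).2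
  rw [Finset.card_eq_sum_card_fiberwise h1]
  push_cast
  refine Finset.sum_congr rfl fun A hA => ?_
  rw [Finset.filter_filter]
  have h2 : (Finset.univ.filter fun σ : Equiv.Perm (Fin n) =>
      g.map σ.toEmbedding ∈ F ∧ g.map σ.toEmbedding = A)
      = Finset.univ.filter fun σ : Equiv.Perm (Fin n) => g.map σ.toEmbedding = A :=
    Finset.filter_congr fun σ _ => ⟨fun h => h.2, fun h => ⟨h ▸ hA, h⟩⟩
  rw [h2]
  split_ifs with h
  · have hpos : (0 : ℝ) < n.choose A.card := by
      exact_mod_cast Nat.choose_pos (by simpa using A.card_le_univ)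
    rw [eq_div_iff hpos.ne', ← h]
    exact_mod_cast card_perm_map_eq g A h.symm
  · rw [Nat.cast_eq_zero, Finset.card_eq_zero, Finset.filter_eq_empty_iff]
    intro σ _ hσ
    exact h (by rw [← hσ, Finset.card_map])

/-! ### Grids of sets -/

/-- The ground set is the disjoint union of ordered parts of sizes `q j`; `gridSet q i` consists
of the first `i j` elements of the part `j`, for every `j`. -/
def gridSet {d : ℕ} (q : Fin d → ℕ) (i : Fin d → ℕ) : Finset (Σ j : Fin d, Fin (q j)) :=
  Finset.univ.sigma fun j => Finset.univ.filter fun a : Fin (q j) => (a : ℕ) < i j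

lemma mem_gridSet {d : ℕ} {q i : Fin d → ℕ} {x : Σ j : Fin d, Fin (q j)} :
    x ∈ gridSet q i ↔ (x.2 : ℕ) < i x.1 := by
  simp [gridSet]

lemma mem_box {d : ℕ} {q i : Fin d → ℕ} : i ∈ box q ↔ ∀ j, i j ≤ q j := by
  simp [box]

lemma card_gridSet {d : ℕ} {q i : Fin d → ℕ} (hi : i ∈ box q) :
    (gridSet q i).card = ∑ j, i j := by
  rw [gridSet, Finset.card_sigma]
  refine Finset.sum_congr rfl fun j _ => ?_
  rw [Fin.card_filter_val_lt]
  exact min_eq_right (mem_box.1 hi j)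

lemma gridSet_subset {d : ℕ} {q i i' : Fin d → ℕ} (hi : i ∈ box q) :
    gridSet q i ⊆ gridSet q i' ↔ ∀ j, i j ≤ i' j := by
  constructor
  · intro h j
    by_contra! hlt
    have hq := mem_box.1 hi j
    have : (⟨j, ⟨i' j, by omega⟩⟩ : Σ j : Fin d, Fin (q j)) ∈ gridSet q i := mem_gridSet.2 hlt
    exact lt_irrefl _ (mem_gridSet.1 (h this))
  · intro h x hx
    exact mem_gridSet.2 ((mem_gridSet.1 hx).trans_le (h _))

/-- The grid of the sets `gridSet q i`, transported to `Fin n` by `e` and then permuted by `σ`. -/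
def gridIn {d n : ℕ} {q : Fin d → ℕ} (e : (Σ j : Fin d, Fin (q j)) ≃ Fin n)
    (σ : Equiv.Perm (Fin n)) (i : Fin d → ℕ) : Finset (Fin n) :=
  ((gridSet q i).map e.toEmbedding).map σ.toEmbedding

lemma gridIn_subset {d n : ℕ} {q : Fin d → ℕ} (e : (Σ j : Fin d, Fin (q j)) ≃ Fin n)
    (σ : Equiv.Perm (Fin n)) {i i' : Fin d → ℕ} (hi : i ∈ box q) :
    gridIn e σ i ⊆ gridIn e σ i' ↔ ∀ j, i j ≤ i' j := by
  rw [gridIn, gridIn, Finset.map_subset_map, Finset.map_subset_map, gridSet_subset hi]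

/-- The 0-1 matrix recording which sets of the grid permuted by `σ` lie in `F`. It has the size
`s × ⋯ × s`; entries outside the box (some index larger than `q j`) are `0`. -/
def gridMatrix {d n : ℕ} {q : Fin d → ℕ} (s : ℕ) (e : (Σ j : Fin d, Fin (q j)) ≃ Fin n)
    (F : Finset (Finset (Fin n))) (σ : Equiv.Perm (Fin n)) (i : Fin d → Fin s) : Bool :=
  decide ((fun j => (i j : ℕ)) ∈ box q ∧ gridIn e σ (fun j => i j) ∈ F)

lemma ones_gridMatrix {d n s : ℕ} {q : Fin d → ℕ} (hs : ∀ j, q j < s)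
    (e : (Σ j : Fin d, Fin (q j)) ≃ Fin n)
    (F : Finset (Finset (Fin n))) (σ : Equiv.Perm (Fin n)) :
    ones (gridMatrix s e F σ) = ((box q).filter fun i => gridIn e σ i ∈ F).card := by
  unfold ones
  refine Finset.card_bij (fun i _ j => (i j : ℕ)) ?_ ?_ ?_
  · intro i hi
    simpa [gridMatrix] using hi
  · intro i _ i' _ h
    funext j
    exact Fin.ext (congrFun h j)
  · intro i hi
    rw [Finset.mem_filter] at hi
    refine ⟨fun j => ⟨i j, (mem_box.1 hi.1 j).trans_lt (hs j)⟩, ?_, rfl⟩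
    simpa [gridMatrix] using hi

/-- Double counting of the pairs (permutation, grid point whose set lies in `F`). A set `A` is met
once per grid point of level `|A|` and permutation taking that point to `A`. -/
lemma sum_ones_gridMatrix {d n s : ℕ} {q : Fin d → ℕ} (hs : ∀ j, q j < s)
    (e : (Σ j : Fin d, Fin (q j)) ≃ Fin n) (F : Finset (Finset (Fin n))) :
    (∑ σ, (ones (gridMatrix s e F σ) : ℝ))
      = ∑ A ∈ F, n.factorial * ((levelCount q A.card : ℝ) / n.choose A.card) := by
  have h1 : ∀ σ, (ones (gridMatrix s e F σ) : ℝ)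
      = ∑ i ∈ box q, if gridIn e σ i ∈ F then (1 : ℝ) else 0 := by
    intro σ
    rw [ones_gridMatrix hs, Finset.card_filter]
    push_cast
    rfl
  simp_rw [h1]
  rw [Finset.sum_comm]
  have h2 : ∀ i ∈ box q, (∑ σ, if gridIn e σ i ∈ F then (1 : ℝ) else 0)
      = ∑ A ∈ F, if ∑ j, i j = A.card then (n.factorial : ℝ) / n.choose A.card else 0 := by
    intro i hi
    have := card_perm_map_mem ((gridSet q i).map e.toEmbedding) F
    rw [Finset.card_map, card_gridSet hi, Finset.card_filter] at this
    rw [← this]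
    push_cast
    rfl
  rw [Finset.sum_congr rfl h2, Finset.sum_comm]
  refine Finset.sum_congr rfl fun A _ => ?_
  rw [← Finset.sum_filter, Finset.sum_const, nsmul_eq_mul]
  unfold levelCount
  ring

/-! ### The permutation matrix of a poset -/

/-- The matrix with a `1` at the point `(ρ 0 p, …, ρ (d - 1) p)` for each `p`, where `ρ j p` stands
for the rank of `p` in the `j`-th linear order. -/
def rankMatrix {d k : ℕ} {P : Type*} [Fintype P] (ρ : Fin d → P ≃ Fin k)
    (i : Fin d → Fin k) : Bool :=
  decide (∃ p, i = fun j => ρ j p)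

lemma isPermMatrix_rankMatrix {d k : ℕ} {P : Type*} [Fintype P] (hk : Fintype.card P = k)
    (hd : 0 < d) (ρ : Fin d → P ≃ Fin k) : IsPermMatrix (rankMatrix ρ) := by
  classical
  constructor
  · have hinj : Function.Injective fun (p : P) (j : Fin d) => ρ j p := fun p p' h =>
      (ρ ⟨0, hd⟩).injective (congrFun h ⟨0, hd⟩)
    refine Eq.trans ?_ ((Finset.card_image_of_injective Finset.univ hinj).trans hk)
    congr 1
    ext i
    simp [rankMatrix, eq_comm]
  · intro j v
    refine ⟨fun j' => ρ j' ((ρ j).symm v), ⟨decide_eq_true ⟨_, rfl⟩, by simp⟩, ?_⟩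
    rintro i ⟨hi, rfl⟩
    obtain ⟨p, rfl⟩ := of_decide_eq_true hi
    simp

/-- Containment between sets of a grid is the coordinatewise order of their indices, so a copy of
the rank matrix in a grid matrix is an induced copy of `P` in `F`. -/
lemma containsInduced_of_matContains {d n k s : ℕ} {q : Fin d → ℕ} {P : Type*} [PartialOrder P]
    [Fintype P] (hd : 0 < d) (ρ : Fin d → P ≃ Fin k)
    (hρ : ∀ x y : P, x < y ↔ ∀ j, ρ j x < ρ j y)
    (e : (Σ j : Fin d, Fin (q j)) ≃ Fin n) (F : Finset (Finset (Fin n)))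
    (σ : Equiv.Perm (Fin n)) (h : MatContains (gridMatrix s e F σ) (rankMatrix ρ)) :
    ContainsInduced P F := by
  obtain ⟨f, hf, hM⟩ := h
  have hp : ∀ p, (fun j => (f j (ρ j p) : ℕ)) ∈ box q ∧ gridIn e σ (fun j => f j (ρ j p)) ∈ F :=
    fun p => of_decide_eq_true (hM (fun j => ρ j p) (decide_eq_true ⟨p, rfl⟩))
  have hsub : ∀ x y, gridIn e σ (fun j => f j (ρ j x)) ⊆ gridIn e σ (fun j => f j (ρ j y))
      ↔ ∀ j, ρ j x ≤ ρ j y := by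
    intro x y
    rw [gridIn_subset e σ (hp x).1]
    exact forall_congr' fun j => by rw [Fin.val_fin_le, (hf j).le_iff_le]
  refine ⟨fun p => gridIn e σ (fun j => f j (ρ j p)), ?_, fun p => (hp p).2, ?_⟩
  · intro x y hxy
    have h1 := (hsub x y).1 hxy.subset ⟨0, hd⟩
    have h2 := (hsub y x).1 hxy.superset ⟨0, hd⟩
    exact (ρ ⟨0, hd⟩).injective (le_antisymm h1 h2)
  · intro x y
    rw [hρ, Finset.ssubset_def, hsub, hsub]
    constructor
    · exact fun h => ⟨fun j => (h j).le, fun h' => (h ⟨0, hd⟩).not_ge (h' _)⟩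
    · rintro ⟨h1, h2⟩ j
      refine lt_of_le_of_ne (h1 j) fun hj => h2 fun j' => ?_
      rw [(ρ j).injective hj]

lemma exists_rank {k : ℕ} {P : Type*} [Fintype P] (hk : Fintype.card P = k)
    (L : LinearOrder P) : ∃ r : P ≃ Fin k, ∀ x y, L.lt x y ↔ r x < r y := by
  let o := Fintype.orderIsoFinOfCardEq P hk
  exact ⟨o.symm.toEquiv, fun x y => (o.symm.lt_iff_lt).symm⟩

/-- For a finite poset `P` on `k` elements of dimension at most `d` (`d ≥ 2`),
there is a permutation d-matrix `M_P` of size `k^d` such that for every `K ≥ 0`: if every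
`M_P`-free d-matrix of size `n^d` has at most `K·n^(d−1)` ones (for every `n`), then
`La#(n,P) ≤ 2^d · K · C(n, ⌊n/2⌋)` for every `n`. -/
theorem stmt_1 (d k : ℕ) (hd : 2 ≤ d) (P : Type) [PartialOrder P] [Fintype P]
    (hk : Fintype.card P = k)
    (hdim : ∃ L : Fin d → LinearOrder P, ∀ x y : P, x < y ↔ ∀ j, (L j).lt x y) :
    ∃ MP : (Fin d → Fin k) → Bool, IsPermMatrix MP ∧
      ∀ K : ℝ, 0 ≤ K →
        (∀ n : ℕ, ∀ M : (Fin d → Fin n) → Bool,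
          ¬ MatContains M MP → (ones M : ℝ) ≤ K * (n : ℝ) ^ (d - 1)) →
        ∀ n : ℕ, ∀ F : Finset (Finset (Fin n)), ¬ ContainsInduced P F →
          (F.card : ℝ) ≤ 2 ^ d * K * (n.choose (n / 2)) := by
  obtain ⟨L, hL⟩ := hdim
  choose ρ hρ using fun j => exists_rank hk (L j)
  have hρ' : ∀ x y : P, x < y ↔ ∀ j, ρ j x < ρ j y := fun x y =>
    (hL x y).trans (forall_congr' fun j => hρ j x y)
  refine ⟨rankMatrix ρ, isPermMatrix_rankMatrix hk (by omega) ρ, ?_⟩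
  intro K hK hM n F hF
  obtain ⟨s, q, hs, hn, hsize⟩ := exists_sizes d n hd
  have e : (Σ j : Fin d, Fin (q j)) ≃ Fin n :=
    Fintype.equivFinOfCardEq (by simp [hn])
  have hfree : ∀ σ, (ones (gridMatrix s e F σ) : ℝ) ≤ K * (s : ℝ) ^ (d - 1) := fun σ =>
    hM s _ fun h => hF (containsInduced_of_matContains (by omega) ρ hρ' e F σ h)
  have hupper : ∑ σ, (ones (gridMatrix s e F σ) : ℝ)
      ≤ n.factorial * (K * (s : ℝ) ^ (d - 1)) := by
    refine (Finset.sum_le_sum fun σ _ => hfree σ).trans (le_of_eq ?_)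
    simp [Fintype.card_perm]
  have hlower : (n.factorial : ℝ) * (F.card * ((levelCount q (n / 2) : ℝ) / n.choose (n / 2)))
      ≤ ∑ σ, (ones (gridMatrix s e F σ) : ℝ) := by
    rw [sum_ones_gridMatrix hs, ← Finset.mul_sum,
      ← nsmul_eq_mul (F.card), ← Finset.sum_const]
    refine mul_le_mul_of_nonneg_left (Finset.sum_le_sum fun A _ => ?_) (Nat.cast_nonneg _)
    exact levelCount_div_choose q hn A.card (by simpa using A.card_le_univ)
  have hfac : (0 : ℝ) < n.factorial := by exact_mod_cast n.factorial_pos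
  have hC : (0 : ℝ) < n.choose (n / 2) := by
    exact_mod_cast Nat.choose_pos (Nat.div_le_self n 2)
  have h1 := le_of_mul_le_mul_left (hlower.trans hupper) hfac
  rw [← mul_div_assoc, div_le_iff₀ hC] at h1
  set T := ∏ j, (q j + 1)
  have hT : (0 : ℝ) < T := by exact_mod_cast Finset.prod_pos fun j _ => Nat.succ_pos (q j)
  have h2 : (T : ℝ) ≤ (n + 1) * levelCount q (n / 2) := by
    exact_mod_cast prod_le_levelCount_mid q hn
  have h3 : (s : ℝ) ^ (d - 1) * (n + 1) ≤ 2 ^ d * T := by exact_mod_cast hsize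
  refine le_of_mul_le_mul_right ?_ hT
  calc (F.card : ℝ) * T ≤ F.card * ((n + 1) * levelCount q (n / 2)) := by gcongr
    _ = (n + 1) * (F.card * levelCount q (n / 2)) := by ring
    _ ≤ (n + 1) * (K * (s : ℝ) ^ (d - 1) * n.choose (n / 2)) := by gcongr
    _ = K * n.choose (n / 2) * ((s : ℝ) ^ (d - 1) * (n + 1)) := by ring
    _ ≤ K * n.choose (n / 2) * (2 ^ d * T) := by gcongr
    _ = 2 ^ d * K * n.choose (n / 2) * T := by ring
end

section
/- (Klazar–Marcus) For every d ≥ 1 and every permutation d-matrix A of size k^d, there exists a constant C such that for every n, every A-free d-matrix of size n×⋯×n has at most C·n^{d−1} one-entries; that is, ex_d(n,A) = O(n^{d−1}). -/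
/-- The set `S` contains the pattern whose `t`-th point has coordinates `σ j t`: there are points
`p t` of `S` which, in every direction `j`, are ordered as the `σ j t`. -/
def PatternIn {d k : ℕ} (σ : Fin d → Fin k → Fin k) (S : Finset (Fin d → ℕ)) : Prop :=
  ∃ p : Fin k → Fin d → ℕ, (∀ t, p t ∈ S) ∧ ∀ j t u, σ j t < σ j u → p t j < p u j

/-- The points of `S` lying in the block of side `s` with index `b`. -/
def blockPts {d : ℕ} (s : ℕ) (S : Finset (Fin d → ℕ)) (b : Fin d → ℕ) : Finset (Fin d → ℕ) :=
  S.filter fun x => (fun j => x j / s) = b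

/-- The residues mod `s` of the `j`-th coordinates of the points of `S` in the block `b`; as the
quotient by `s` is constant on a block, these correspond to the `j`-th coordinates themselves. -/
def blockRes {d : ℕ} (s : ℕ) (S : Finset (Fin d → ℕ)) (j : Fin d) (b : Fin d → ℕ) : Finset ℕ :=
  (blockPts s S b).image fun x => x j % s

/-- The indices of the nonempty blocks of side `s`. -/
def blocks {d : ℕ} (s : ℕ) (S : Finset (Fin d → ℕ)) : Finset (Fin d → ℕ) :=
  S.image fun x j => x j / s

/-- The blocks that are wide in direction `j`. -/
def wideBlocks {d : ℕ} (k s : ℕ) (S : Finset (Fin d → ℕ)) (j : Fin d) : Finset (Fin d → ℕ) :=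
  (blocks s S).filter fun b => k ≤ (blockRes s S j b).card

lemma mem_blockPts {d s : ℕ} {S : Finset (Fin d → ℕ)} {b x : Fin d → ℕ} :
    x ∈ blockPts s S b ↔ x ∈ S ∧ ∀ j, x j / s = b j := by
  simp [blockPts, funext_iff]

lemma not_patternIn_image_div {d k : ℕ} (s : ℕ) {σ : Fin d → Fin k → Fin k}
    {S : Finset (Fin d → ℕ)} (h : ¬ PatternIn σ S) : ¬ PatternIn σ (blocks s S) := by
  rintro ⟨p, hp, hlt⟩
  have : ∀ t, ∃ x ∈ S, (fun j => x j / s) = p t := fun t => by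
    simpa [blocks] using hp t
  choose q hq hqp using this
  refine h ⟨q, hq, fun j t u htu => ?_⟩
  have h1 := hlt j t u htu
  rw [← hqp t, ← hqp u] at h1
  by_contra hcon
  exact absurd (Nat.div_le_div_right (c := s) (not_lt.mp hcon)) (not_le.mpr h1)

lemma card_dim_one {k : ℕ} (σ : Fin 1 → Fin k → Fin k) {S : Finset (Fin 1 → ℕ)}
    (h : ¬ PatternIn σ S) : S.card ≤ k := by
  by_contra hcon
  have hinj : Function.Injective (fun x : Fin 1 → ℕ => x 0) := by
    intro x y hxy
    ext j
    rw [Subsingleton.elim j 0]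
    exact hxy
  have hc : k ≤ (S.image fun x => x 0).card := by
    rw [Finset.card_image_of_injective _ hinj]
    omega
  let e := Finset.orderEmbOfCardLe _ hc
  refine h ⟨fun t _ => e (σ 0 t), fun t => ?_, fun j t u htu => ?_⟩
  · obtain ⟨x, hx, hxe⟩ := Finset.mem_image.mp (Finset.orderEmbOfCardLe_mem _ hc (σ 0 t))
    convert hx using 1
    apply hinj
    exact hxe.symm
  · rw [Subsingleton.elim j 0] at htu
    exact e.strictMono htu

/-- A block has at most as many points as the box spanned by its coordinate projections. -/
lemma card_blockPts_le_prod {d : ℕ} (s : ℕ) (S : Finset (Fin d → ℕ)) (b : Fin d → ℕ) :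
    (blockPts s S b).card ≤ ∏ j, (blockRes s S j b).card := by
  rw [← Fintype.card_piFinset]
  refine Finset.card_le_card_of_injOn (fun x j => x j % s) (fun x hx => ?_) ?_
  · simp only [Finset.mem_coe, Fintype.mem_piFinset]
    exact fun j => Finset.mem_image_of_mem (fun x : Fin d → ℕ => x j % s) hx
  · intro x hx y hy hxy
    ext j
    have h1 := (mem_blockPts.mp hx).2 j
    have h2 := (mem_blockPts.mp hy).2 j
    have h3 : x j % s = y j % s := congrFun hxy j
    rw [← Nat.div_add_mod (x j) s, ← Nat.div_add_mod (y j) s, h1, h2, h3]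

lemma blockRes_subset {d s : ℕ} (hs : 0 < s) (S : Finset (Fin d → ℕ)) (j : Fin d)
    (b : Fin d → ℕ) : blockRes s S j b ⊆ Finset.range s := by
  intro r hr
  obtain ⟨x, -, rfl⟩ := Finset.mem_image.mp hr
  exact Finset.mem_range.mpr (Nat.mod_lt _ hs)

/-- Blocks with the same `j`-th index `c` and the same set `R` of at least `k` residues in
direction `j`: if they contain the pattern with direction `j` deleted, the set `S` contains the
whole pattern, the `j`-th coordinates being chosen among the common residues. -/
lemma patternIn_of_fiber {d k s : ℕ} {σ : Fin (d + 1) → Fin k → Fin k}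
    {S : Finset (Fin (d + 1) → ℕ)} (j : Fin (d + 1)) (c : ℕ) (R : Finset ℕ) (hR : k ≤ R.card)
    {F : Finset (Fin (d + 1) → ℕ)} (hF : ∀ b ∈ F, b j = c ∧ blockRes s S j b = R)
    (h : PatternIn (fun i => σ (j.succAbove i)) (F.image fun b i => b (j.succAbove i))) :
    PatternIn σ S := by
  obtain ⟨p, hp, hlt⟩ := h
  let e := Finset.orderEmbOfCardLe R hR
  have : ∀ t, ∃ x ∈ S, x j / s = c ∧ x j % s = e (σ j t) ∧
      ∀ i, x (j.succAbove i) / s = p t i := by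
    intro t
    obtain ⟨b, hb, hbp⟩ := Finset.mem_image.mp (hp t)
    have he : e (σ j t) ∈ blockRes s S j b := by
      rw [(hF b hb).2]
      exact Finset.orderEmbOfCardLe_mem _ hR _
    obtain ⟨x, hx, hxe⟩ := Finset.mem_image.mp he
    obtain ⟨hxS, hxb⟩ := mem_blockPts.mp hx
    exact ⟨x, hxS, (hxb j).trans (hF b hb).1, hxe, fun i => by rw [hxb, ← hbp]⟩
  choose x hxS hxc hxe hxp using this
  refine ⟨x, hxS, fun l t u htu => ?_⟩
  rcases Fin.eq_self_or_eq_succAbove j l with rfl | ⟨i, rfl⟩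
  · rw [← Nat.div_add_mod (x t l) s, ← Nat.div_add_mod (x u l) s, hxc, hxc, hxe, hxe]
    exact Nat.add_lt_add_left (e.strictMono htu) _
  · have h1 := hlt i t u htu
    rw [← hxp, ← hxp] at h1
    by_contra hcon
    exact absurd (Nat.div_le_div_right (c := s) (not_lt.mp hcon)) (not_le.mpr h1)

/-- The bound on wide blocks, given the bound `C * N ^ d` in one dimension less: the factor `N`
counts block indices in direction `j`, the factor `2 ^ s` sets of residues. -/
lemma card_wide_le_s2 {d k s N C : ℕ} (hs : 0 < s) {σ : Fin (d + 2) → Fin k → Fin k}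
    {S : Finset (Fin (d + 2) → ℕ)} (hS : ∀ x ∈ S, ∀ j, x j < N * s) (h : ¬ PatternIn σ S)
    (j : Fin (d + 2))
    (hC : ∀ T : Finset (Fin (d + 1) → ℕ), (∀ x ∈ T, ∀ i, x i < N) →
      ¬ PatternIn (fun i => σ (j.succAbove i)) T → T.card ≤ C * N ^ d) :
    (wideBlocks k s S j).card ≤ C * N ^ d * (N * 2 ^ s) := by
  have hB : ∀ b ∈ blocks s S, ∀ i, b i < N := by
    intro b hb i
    obtain ⟨x, hx, rfl⟩ := Finset.mem_image.mp hb
    exact Nat.div_lt_of_lt_mul (by rw [mul_comm]; exact hS x hx i)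
  have hkey : (Finset.range N ×ˢ (Finset.range s).powerset).card = N * 2 ^ s := by
    simp
  rw [← hkey]
  refine Finset.card_le_mul_card_image_of_maps_to (f := fun b => (b j, blockRes s S j b)) ?_ _ ?_
  · intro b hb
    have hb' := (Finset.mem_filter.mp hb).1
    simp only [Finset.mem_product, Finset.mem_range, Finset.mem_powerset]
    exact ⟨hB b hb' j, blockRes_subset hs S j b⟩
  · rintro ⟨c, R⟩ -
    set F := (wideBlocks k s S j).filter fun b => (b j, blockRes s S j b) = (c, R) with hFdef
    have hF : ∀ b ∈ F, b ∈ wideBlocks k s S j ∧ b j = c ∧ blockRes s S j b = R := by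
      intro b hb
      simpa [hFdef] using hb
    rcases F.eq_empty_or_nonempty with hFe | ⟨b₀, hb₀⟩
    · rw [hFe]
      simp
    have hR : k ≤ R.card := by
      have h0 := hF b₀ hb₀
      rw [← h0.2.2]
      exact (Finset.mem_filter.mp h0.1).2
    have hcard : (F.image fun b i => b (j.succAbove i)).card = F.card := by
      refine Finset.card_image_of_injOn fun b hb b' hb' hbb => ?_
      ext l
      rcases Fin.eq_self_or_eq_succAbove j l with rfl | ⟨i, rfl⟩
      · rw [(hF b hb).2.1, (hF b' hb').2.1]
      · exact congrFun hbb i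
    rw [← hcard]
    refine hC _ ?_ fun hp => h (patternIn_of_fiber j c R hR (fun b hb => (hF b hb).2) hp)
    intro y hy i
    obtain ⟨b, hb, rfl⟩ := Finset.mem_image.mp hy
    exact hB b (Finset.mem_filter.mp (hF b hb).1).1 _

lemma card_le_blocks_s2 {d s : ℕ} (k : ℕ) (hs : 0 < s) (S : Finset (Fin d → ℕ)) :
    S.card ≤ k ^ d * (blocks s S).card + s ^ d * ∑ j, (wideBlocks k s S j).card := by
  have hpt : ∀ b ∈ blocks s S, (blockPts s S b).card ≤
      k ^ d + s ^ d * ∑ j, if k ≤ (blockRes s S j b).card then 1 else 0 := by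
    intro b _
    refine (card_blockPts_le_prod s S b).trans ?_
    by_cases hw : ∃ j, k ≤ (blockRes s S j b).card
    · obtain ⟨j, hj⟩ := hw
      have h1 : ∏ j, (blockRes s S j b).card ≤ s ^ d := by
        refine (Finset.prod_le_pow_card _ _ s fun i _ => ?_).trans (by simp)
        simpa using Finset.card_le_card (blockRes_subset hs S i b)
      have h2 : 1 ≤ ∑ j, if k ≤ (blockRes s S j b).card then 1 else 0 := by
        refine le_trans ?_ (Finset.single_le_sum (fun _ _ => Nat.zero_le _) (Finset.mem_univ j))
        simp [hj]
      exact h1.trans ((Nat.le_mul_of_pos_right _ h2).trans (Nat.le_add_left _ _))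
    · push Not at hw
      refine le_trans ?_ (Nat.le_add_right _ _)
      exact (Finset.prod_le_pow_card _ _ k fun i _ => (hw i).le).trans (by simp)
  calc S.card = ∑ b ∈ blocks s S, (blockPts s S b).card :=
        Finset.card_eq_sum_card_image _ _
    _ ≤ ∑ b ∈ blocks s S,
          (k ^ d + s ^ d * ∑ j, if k ≤ (blockRes s S j b).card then 1 else 0) :=
        Finset.sum_le_sum hpt
    _ = _ := by
        rw [Finset.sum_add_distrib, Finset.sum_const, smul_eq_mul, mul_comm, ← Finset.mul_sum,
          Finset.sum_comm]
        simp [wideBlocks]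

/-- The bound for side lengths that are powers of `s`, from the recursion over blocks. -/
lemma card_le_pow {d k s C : ℕ} (hs : s = (k + 2) ^ 2) (σ : Fin (d + 2) → Fin k → Fin k)
    (hC : ∀ (j : Fin (d + 2)) (N : ℕ) (T : Finset (Fin (d + 1) → ℕ)),
      (∀ x ∈ T, ∀ i, x i < N) →
      ¬ PatternIn (fun i => σ (j.succAbove i)) T → T.card ≤ C * N ^ d) (m : ℕ) :
    ∀ S : Finset (Fin (d + 2) → ℕ), (∀ x ∈ S, ∀ j, x j < s ^ m) → ¬ PatternIn σ S →
      S.card ≤ (s ^ (d + 2) * ((d + 2) * (C * 2 ^ s)) + 1) * (s ^ m) ^ (d + 1) := by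
  have hs0 : 0 < s := by rw [hs]; positivity
  set D := s ^ (d + 2) * ((d + 2) * (C * 2 ^ s)) with hD
  induction m with
  | zero =>
    intro S hS _
    have h1 : S.card ≤ 1 := by
      rw [Finset.card_le_one]
      intro x hx y hy
      ext j
      have h2 := hS x hx j
      have h3 := hS y hy j
      simp only [pow_zero] at h2 h3
      omega
    simp only [pow_zero, one_pow]
    omega
  | succ m ih =>
    intro S hS h
    have hS' : ∀ x ∈ S, ∀ j, x j < s ^ m * s := fun x hx j => by
      rw [← pow_succ]
      exact hS x hx j
    have hB := ih (blocks s S) (by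
      intro b hb i
      obtain ⟨x, hx, rfl⟩ := Finset.mem_image.mp hb
      exact Nat.div_lt_of_lt_mul (by rw [mul_comm]; exact hS' x hx i))
      (not_patternIn_image_div s h)
    have hW : ∑ j, (wideBlocks k s S j).card ≤
        (d + 2) * (C * (s ^ m) ^ d * (s ^ m * 2 ^ s)) := by
      refine (Finset.sum_le_card_nsmul _ _ _ fun j _ =>
        card_wide_le_s2 hs0 hS' h j (hC j (s ^ m))).trans ?_
      simp
    -- `k ^ (d + 2) < (k + 2) ^ (2 * (d + 1)) = s ^ (d + 1)` makes the recursion contract.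
    have hk : k ^ (d + 2) + 1 ≤ s ^ (d + 1) := by
      have h1 : k ^ (d + 2) < (k + 2) ^ (d + 2) := Nat.pow_lt_pow_left (by omega) (by omega)
      have h2 : (k + 2) ^ (d + 2) ≤ (k + 2) ^ (2 * (d + 1)) :=
        Nat.pow_le_pow_right (by omega) (by omega)
      rw [hs, ← pow_mul]
      omega
    calc S.card ≤ k ^ (d + 2) * (blocks s S).card
          + s ^ (d + 2) * ∑ j, (wideBlocks k s S j).card := card_le_blocks_s2 k hs0 S
      _ ≤ k ^ (d + 2) * ((D + 1) * (s ^ m) ^ (d + 1))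
          + s ^ (d + 2) * ((d + 2) * (C * (s ^ m) ^ d * (s ^ m * 2 ^ s))) := by gcongr
      _ = (k ^ (d + 2) * (D + 1) + D) * (s ^ m) ^ (d + 1) := by rw [hD]; ring
      _ ≤ ((D + 1) * (k ^ (d + 2) + 1)) * (s ^ m) ^ (d + 1) := by
          gcongr
          nlinarith
      _ ≤ ((D + 1) * s ^ (d + 1)) * (s ^ m) ^ (d + 1) := by gcongr
      _ = (D + 1) * (s ^ (m + 1)) ^ (d + 1) := by rw [pow_succ s m, mul_pow]; ring

/-- The theorem for sets of points, in dimension `d + 1`. -/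
lemma card_le_of_not_patternIn (k d : ℕ) : ∀ σ : Fin (d + 1) → Fin k → Fin k,
    ∃ C : ℕ, ∀ (n : ℕ) (S : Finset (Fin (d + 1) → ℕ)), (∀ x ∈ S, ∀ j, x j < n) →
      ¬ PatternIn σ S → S.card ≤ C * n ^ d := by
  induction d with
  | zero => exact fun σ => ⟨k, fun n S _ h => by simpa using card_dim_one σ h⟩
  | succ d ih =>
    intro σ
    choose c hc using fun j : Fin (d + 2) => ih fun i => σ (j.succAbove i)
    obtain ⟨s, hs⟩ : ∃ s, s = (k + 2) ^ 2 := ⟨_, rfl⟩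
    have hpow := card_le_pow (C := ∑ j, c j) hs σ (fun j N T hT h =>
      (hc j N T hT h).trans (Nat.mul_le_mul_right _
        (Finset.single_le_sum (fun _ _ => Nat.zero_le _) (Finset.mem_univ j))))
    set E := s ^ (d + 2) * ((d + 2) * ((∑ j, c j) * 2 ^ s)) + 1
    refine ⟨E * s ^ (d + 1), fun n S hS h => ?_⟩
    rcases Nat.eq_zero_or_pos n with rfl | hn
    · have : S = ∅ := by
        refine Finset.eq_empty_of_forall_notMem fun x hx => ?_
        exact absurd (hS x hx 0) (Nat.not_lt_zero _)
      simp [this]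
    have hs1 : 1 < s := by rw [hs]; exact Nat.one_lt_pow (by omega) (by omega)
    have h1 := hpow (Nat.log s n + 1)
      S (fun x hx j => (hS x hx j).trans (Nat.lt_pow_succ_log_self hs1 n)) h
    calc S.card ≤ E * (s ^ (Nat.log s n + 1)) ^ (d + 1) := h1
      _ ≤ E * (n * s) ^ (d + 1) := by
          rw [pow_succ s (Nat.log s n)]
          gcongr
          exact Nat.pow_log_le_self s hn.ne'
      _ = E * s ^ (d + 1) * n ^ (d + 1) := by rw [mul_pow]; ring

/-- **Klazar–Marcus.** For every `d ≥ 1` and every permutation d-matrix `A`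
of size `k^d`, there is a constant `C` such that for every `n`, every `A`-free d-matrix of
size `n^d` has at most `C·n^(d−1)` one-entries. -/
theorem stmt_2 (d k : ℕ) (hd : 1 ≤ d) (A : (Fin d → Fin k) → Bool) (hA : IsPermMatrix A) :
    ∃ C : ℝ, 0 ≤ C ∧ ∀ n : ℕ, ∀ M : (Fin d → Fin n) → Bool,
      ¬ MatContains M A → (ones M : ℝ) ≤ C * (n : ℝ) ^ (d - 1) := by
  obtain ⟨d, rfl⟩ : ∃ e, d = e + 1 := ⟨d - 1, by omega⟩
  -- The one-entries of `A`, indexed by their coordinate `0`.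
  choose P hP hPu using fun t => hA.2 0 t
  have hinj : ∀ j, Function.Injective fun t => P t j := by
    intro j t u htu
    have h1 : P t = P u :=
      (hA.2 j (P t j)).unique ⟨(hP t).1, rfl⟩ ⟨(hP u).1, htu.symm⟩
    rw [← (hP t).2, ← (hP u).2, h1]
  obtain ⟨C, hC⟩ := card_le_of_not_patternIn k d fun j t => P t j
  refine ⟨C, Nat.cast_nonneg _, fun n M hM => ?_⟩
  let S : Finset (Fin (d + 1) → ℕ) :=
    (Finset.univ.filter fun i => M i = true).image fun i j => (i j : ℕ)
  have hmem : ∀ {x}, x ∈ S → ∃ i, M i = true ∧ (fun j => (i j : ℕ)) = x := by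
    intro x hx
    simpa [S] using hx
  have hcard : S.card = ones M := by
    refine Finset.card_image_of_injective _ fun x y hxy => ?_
    ext j
    exact congrFun hxy j
  have hmain := hC n S (fun x hx j => by
    obtain ⟨i, -, rfl⟩ := hmem hx
    exact (i j).2) (by
    rintro ⟨p, hp, hlt⟩
    choose q hq hqp using fun t => hmem (hp t)
    have hbij : ∀ j, Function.Bijective fun t => P t j :=
      fun j => Finite.injective_iff_bijective.mp (hinj j)
    let e : ∀ j, Fin k ≃ Fin k := fun j => Equiv.ofBijective _ (hbij j)
    have he : ∀ j t, e j t = P t j := fun _ _ => rfl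
    refine hM ⟨fun j v => q ((e j).symm v) j, fun j v w hvw => ?_, fun i hi => ?_⟩
    · have h1 := hlt j ((e j).symm v) ((e j).symm w) (by
        simp only [← he, Equiv.apply_symm_apply]
        exact hvw)
      rw [← hqp, ← hqp] at h1
      exact h1
    · have hPi : i = P (i 0) := hPu (i 0) i ⟨hi, rfl⟩
      have h2 : ∀ j, (e j).symm (i j) = i 0 := fun j => by
        rw [Equiv.symm_apply_eq, he, ← hPi]
      simp only [h2]
      exact hq (i 0))
  rw [hcard] at hmain
  rw [Nat.add_sub_cancel]
  exact_mod_cast hmain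
end

section
/- Let d ≥ 1, let A be a d-matrix, and let K be a nonnegative real. If ex_d(n,A) ≤ K·n^{d−1} for every positive integer n, then for all positive integers n₁,…,n_d we have ex_d(n₁×⋯×n_d, A) ≤ K · (n₁⋯n_d)/(min_{1≤i≤d} n_i). -/
/-- The extremal number: the maximum number of 1-entries of an `A`-free
hypermatrix of size `nn`. -/
noncomputable def exd {ι : Type*} [Fintype ι] [DecidableEq ι] (nn : ι → ℕ) {kk : ι → ℕ}
    (A : (∀ j, Fin (kk j)) → Bool) : ℕ :=
  sSup {m : ℕ | ∃ M : (∀ j, Fin (nn j)) → Bool, ¬ MatContains M A ∧ ones M = m}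

theorem exd_bddAbove {ι : Type*} [Fintype ι] [DecidableEq ι] (nn : ι → ℕ) {kk : ι → ℕ}
    (A : (∀ j, Fin (kk j)) → Bool) :
    BddAbove {m : ℕ | ∃ M : (∀ j, Fin (nn j)) → Bool, ¬ MatContains M A ∧ ones M = m} := by
  refine ⟨Fintype.card (∀ j, Fin (nn j)), ?_⟩
  rintro _ ⟨M, -, rfl⟩
  exact Finset.card_le_univ _

theorem ones_le_exd {ι : Type*} [Fintype ι] [DecidableEq ι] {nn : ι → ℕ} {kk : ι → ℕ}
    (A : (∀ j, Fin (kk j)) → Bool) (M : (∀ j, Fin (nn j)) → Bool) (hM : ¬ MatContains M A) :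
    ones M ≤ exd nn A :=
  le_csSup (exd_bddAbove nn A) ⟨M, hM, rfl⟩

/-- The submatrix of an `A`-free `M` on a product of `m`-element index sets is `A`-free, so the ones
of `M` in that product number at most the extremal number of the `m × ⋯ × m` cube. -/
theorem card_restrict_le {ι : Type*} [Fintype ι] [DecidableEq ι] {nn : ι → ℕ} {kk : ι → ℕ}
    (A : (∀ j, Fin (kk j)) → Bool) (M : (∀ j, Fin (nn j)) → Bool) (hM : ¬ MatContains M A)
    (m : ℕ) (S : ∀ j, Finset (Fin (nn j))) (hS : ∀ j, (S j).card = m) :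
    (Finset.univ.filter fun i => M i = true ∧ ∀ j, i j ∈ S j).card
      ≤ exd (fun _ : ι => m) A := by
  refine le_trans ?_ (ones_le_exd (nn := fun _ : ι => m) A
    (fun i => M fun j => (S j).orderEmbOfFin (hS j) (i j)) ?_)
  · refine Finset.card_le_card_of_surjOn
      (fun i j => (S j).orderEmbOfFin (hS j) (i j)) ?_
    intro i hi
    simp only [Finset.coe_filter, Finset.mem_univ, true_and, Set.mem_ofPred_eq] at hi
    have hx : ∀ j, ∃ x, (S j).orderEmbOfFin (hS j) x = i j := fun j => by
      have : i j ∈ Set.range ((S j).orderEmbOfFin (hS j)) := by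
        rw [Finset.range_orderEmbOfFin]; exact hi.2 j
      exact this
    choose x hx using hx
    refine ⟨x, ?_, funext hx⟩
    simp [hx, hi.1]
  · rintro ⟨f, hf, hA⟩
    exact hM ⟨fun j a => (S j).orderEmbOfFin (hS j) (f j a),
      fun j => ((S j).orderEmbOfFin (hS j)).strictMono.comp (hf j), hA⟩

/-- The cyclic interval `{t, t + 1, …, t + m - 1}` of `Fin N`, with addition modulo `N`. -/
def cyc {N m : ℕ} (hm : m ≤ N) (t : Fin N) : Finset (Fin N) :=
  Finset.univ.image fun s : Fin m => t + Fin.castLE hm s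

theorem cyc_card {N m : ℕ} (hm : m ≤ N) (t : Fin N) : (cyc hm t).card = m := by
  have : NeZero N := ⟨fun h => by subst h; exact t.elim0⟩
  rw [cyc, Finset.card_image_of_injective]
  · simp
  · intro a b hab
    exact Fin.castLE_injective hm (add_left_cancel hab)

theorem cyc_count {N m : ℕ} (hm : m ≤ N) (i : Fin N) :
    (Finset.univ.filter fun t => i ∈ cyc hm t).card = m := by
  have : NeZero N := ⟨fun h => by subst h; exact i.elim0⟩
  have : (Finset.univ.filter fun t => i ∈ cyc hm t)
      = Finset.univ.image fun s : Fin m => i - Fin.castLE hm s := by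
    ext t
    simp only [cyc, Finset.mem_filter, Finset.mem_univ, true_and, Finset.mem_image]
    exact exists_congr fun s =>
      ⟨fun h => by rw [← h, add_sub_cancel_right], fun h => by rw [← h, sub_add_cancel]⟩
  rw [this, Finset.card_image_of_injective]
  · simp
  · intro a b hab
    exact Fin.castLE_injective hm (sub_right_injective hab)

/-- Double counting of the pairs (1-entry of `M`, product of cyclic intervals containing it). -/
theorem ones_mul_pow_le {ι : Type*} [Fintype ι] [DecidableEq ι] {nn : ι → ℕ} {kk : ι → ℕ}
    (A : (∀ j, Fin (kk j)) → Bool) (M : (∀ j, Fin (nn j)) → Bool) (hM : ¬ MatContains M A)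
    (m : ℕ) (hm : ∀ j, m ≤ nn j) :
    ones M * m ^ Fintype.card ι ≤ (∏ j, nn j) * exd (fun _ : ι => m) A := by
  have key := Finset.sum_card_bipartiteAbove_eq_sum_card_bipartiteBelow
    (s := Finset.univ.filter fun i => M i = true)
    (t := (Finset.univ : Finset (∀ j, Fin (nn j))))
    (fun i t => ∀ j, i j ∈ cyc (hm j) (t j))
  have h1 : ∀ i : ∀ j, Fin (nn j), (Finset.bipartiteAbove
      (fun i t : ∀ j, Fin (nn j) => ∀ j, i j ∈ cyc (hm j) (t j)) Finset.univ i).card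
        = m ^ Fintype.card ι := by
    intro i
    have : Finset.bipartiteAbove
        (fun i t : ∀ j, Fin (nn j) => ∀ j, i j ∈ cyc (hm j) (t j)) Finset.univ i
        = Fintype.piFinset fun j => Finset.univ.filter fun t => i j ∈ cyc (hm j) t := by
      ext t
      simp [Finset.bipartiteAbove]
    rw [this, Fintype.card_piFinset]
    simp [cyc_count]
  have h2 : ∀ t : ∀ j, Fin (nn j), (Finset.bipartiteBelow
      (fun i t : ∀ j, Fin (nn j) => ∀ j, i j ∈ cyc (hm j) (t j))
      (Finset.univ.filter fun i => M i = true) t).card ≤ exd (fun _ : ι => m) A := by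
    intro t
    rw [Finset.bipartiteBelow, Finset.filter_filter]
    exact card_restrict_le A M hM m (fun j => cyc (hm j) (t j)) fun j => cyc_card (hm j) (t j)
  calc ones M * m ^ Fintype.card ι = _ := by
        rw [Finset.sum_congr rfl fun i _ => h1 i, Finset.sum_const, smul_eq_mul] at key
        exact key
    _ ≤ _ := Finset.sum_le_sum fun t _ => h2 t
    _ = _ := by simp

/-- If `ex_d(n,A) ≤ K·n^(d−1)` for all positive `n`, then for all positive
`n₁,…,n_d`, `ex_d(n₁×⋯×n_d, A) ≤ K·(n₁⋯n_d)/(min_i n_i)`. -/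
theorem stmt_4 (d : ℕ) (hd : 1 ≤ d) (kk : Fin d → ℕ) (A : (∀ j, Fin (kk j)) → Bool)
    (K : ℝ) (hK : 0 ≤ K)
    (h : ∀ n : ℕ, 0 < n → (exd (fun _ : Fin d => n) A : ℝ) ≤ K * (n : ℝ) ^ (d - 1))
    (n : Fin d → ℕ) (hn : ∀ i, 0 < n i) :
    (exd n A : ℝ) ≤ K * (∏ i, (n i : ℝ)) / ((⨅ i, n i : ℕ) : ℝ) := by
  have : Nonempty (Fin d) := ⟨⟨0, hd⟩⟩
  set m := ⨅ i, n i with hmdef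
  have hle : ∀ j, m ≤ n j := fun j => ciInf_le (OrderBot.bddBelow _) j
  have hpos : 0 < m := by
    obtain ⟨i, hi⟩ := ciInf_mem n
    rw [hmdef, ← hi]
    exact hn i
  have hm0 : (0 : ℝ) < m := by exact_mod_cast hpos
  -- If every matrix contains `A`, the supremum is over the empty set, with junk value `0`.
  rcases Set.eq_empty_or_nonempty
    {m : ℕ | ∃ M : (∀ j, Fin (n j)) → Bool, ¬ MatContains M A ∧ ones M = m} with he | hne
  · rw [exd, he]
    simp only [csSup_empty, bot_eq_zero', Nat.cast_zero]
    positivity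
  · obtain ⟨M, hM, hMe⟩ := Nat.sSup_mem hne (exd_bddAbove n A)
    change ones M = exd n A at hMe
    have hmain := ones_mul_pow_le A M hM m hle
    rw [hMe, Fintype.card_fin] at hmain
    have hmain' : (exd n A : ℝ) * (m : ℝ) ^ d
        ≤ (∏ i, (n i : ℝ)) * (exd (fun _ : Fin d => m) A : ℝ) := by exact_mod_cast hmain
    have hP : (0 : ℝ) ≤ ∏ i, (n i : ℝ) := by positivity
    rw [le_div_iff₀ hm0]
    refine le_of_mul_le_mul_right ?_ (pow_pos hm0 (d - 1))
    calc (exd n A : ℝ) * m * (m : ℝ) ^ (d - 1) = (exd n A : ℝ) * (m : ℝ) ^ d := by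
          rw [mul_assoc, mul_pow_sub_one (by omega)]
      _ ≤ _ := hmain'
      _ ≤ (∏ i, (n i : ℝ)) * (K * (m : ℝ) ^ (d - 1)) :=
          mul_le_mul_of_nonneg_left (h m hpos) hP
      _ = _ := by ring
end

section
/- Let n ≥ 0, d ≥ 1, and let F be a subset of [n] = {1,…,n}. Then the number N of permutation d-partitions Q of [n] such that F is a prefix union of Q satisfies ((d−1)!)² · N = (|F| + d − 1)! · (n − |F| + d − 1)!; that is, N = (|F|+d−1)!/(d−1)! · (n−|F|+d−1)!/(d−1)!. -/
/-!
Call a `d`-tuple of lists over `α` an arrangement of a finite set `S` if the multiset sum of its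
entries is `S`, that is, each element of `S` occurs exactly once in total and nothing else occurs.

The proof has two ingredients.

* A set `S` of size `s` has `d (d+1) ⋯ (d+s-1) = d.ascFactorial s` arrangements
  (`exists_arrangements`). An arrangement into `d + 1` lists either has an empty first list, which
  leaves an arrangement of `S` into `d` lists, or its first list starts with some `a ∈ S`, and
  deleting that entry leaves an arrangement of `S \ {a}` into `d + 1` lists. The rising factorial
  satisfies the resulting recurrence (`ascFactorial_recurrence`).

* Permutation partitions of `[n]` with prefix union `F` correspond bijectively to pairs of
  arrangements of `F` and of its complement, by concatenating the two tuples entrywise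
  (`mem_target_iff`, `append_injective`).

Hence `N = d.ascFactorial |F| * d.ascFactorial (n - |F|)`.
-/

/-- A permutation d-partition of `[n]`: an ordered partition of a permutation of the
elements of `[n]` into `d` (possibly empty) sequences. -/
def IsPermPartition {n d : ℕ} (Q : Fin d → List (Fin n)) : Prop :=
  (List.ofFn Q).flatten.Perm (List.finRange n)

/-- `F` is a prefix union of the permutation d-partition `Q`. -/
def IsPrefixUnion {n d : ℕ} (Q : Fin d → List (Fin n)) (F : Finset (Fin n)) : Prop :=
  ∃ t : Fin d → ℕ, (∀ j, t j ≤ (Q j).length) ∧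
    F = Finset.univ.biUnion fun j => ((Q j).take (t j)).toFinset

lemma ascFactorial_recurrence (d s : ℕ) :
    (d + 1).ascFactorial s = d.ascFactorial s + s * (d + 1).ascFactorial (s - 1) := by
  cases s with
  | zero => simp
  | succ s =>
    have h := Nat.succ_ascFactorial d s
    rw [Nat.ascFactorial_succ, Nat.ascFactorial_succ, Nat.add_sub_cancel]
    linarith

/-- Arrangements of `S` into `d` lists form a finite set with `d.ascFactorial |S|` elements. -/
lemma exists_arrangements {α : Type*} [DecidableEq α] (d : ℕ) :
    ∀ (s : ℕ) (S : Finset α), S.card = s → ∃ T : Finset (Fin d → List α),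
      (∀ Q, Q ∈ T ↔ ∑ j, (Q j : Multiset α) = S.val) ∧ T.card = d.ascFactorial s := by
  induction d with
  | zero =>
    intro s S hS
    by_cases h : S = ∅
    · subst h
      obtain rfl : s = 0 := by simpa using hS.symm
      exact ⟨{Fin.elim0}, fun Q => by simp [Subsingleton.elim Q Fin.elim0], by simp⟩
    · refine ⟨∅, fun Q => ?_, ?_⟩
      · simpa [eq_comm] using h
      · cases s with
        | zero => exact absurd (Finset.card_eq_zero.mp hS) h
        | succ s => simp [Nat.zero_ascFactorial]
  | succ d ihd =>
    intro s
    induction s with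
    | zero =>
      intro S hS
      obtain rfl := Finset.card_eq_zero.mp hS
      refine ⟨{fun _ => []}, fun Q => ?_, by simp⟩
      simp [Finset.sum_eq_zero_iff, funext_iff]
    | succ s ihs =>
      intro S hS
      obtain ⟨T₀, hT₀, hc₀⟩ := ihd (s + 1) S hS
      have key : ∀ a : α, ∃ T : Finset (Fin (d + 1) → List α), a ∈ S →
          (∀ Q, Q ∈ T ↔ ∑ j, (Q j : Multiset α) = (S.erase a).val) ∧
            T.card = (d + 1).ascFactorial s := by
        intro a
        by_cases ha : a ∈ S
        · obtain ⟨T, hT⟩ := ihs (S.erase a) (by rw [Finset.card_erase_of_mem ha, hS]; rfl)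
          exact ⟨T, fun _ => hT⟩
        · exact ⟨∅, fun h => absurd h ha⟩
      choose T hT using key
      -- the tuple obtained by putting `a` in front of the first list
      let push : α → (Fin (d + 1) → List α) → (Fin (d + 1) → List α) :=
        fun a Q => Fin.cons (a :: Q 0) (Fin.tail Q)
      have push_inj : ∀ a, Function.Injective (push a) := by
        intro a Q Q' h
        obtain ⟨h1, h2⟩ := Fin.cons_inj.mp h
        rw [← Fin.cons_self_tail Q, ← Fin.cons_self_tail Q', h2, (List.cons.inj h1).2]
      let nil₀ : (Fin d → List α) → (Fin (d + 1) → List α) := fun Q => Fin.cons [] Q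
      have nil_inj : Function.Injective nil₀ := fun Q Q' h => (Fin.cons_inj.mp h).2
      refine ⟨T₀.image nil₀ ∪ S.biUnion fun a => (T a).image (push a), fun Q => ?_, ?_⟩
      · simp only [Finset.mem_union, Finset.mem_image, Finset.mem_biUnion]
        constructor
        · rintro (⟨Q', hQ', rfl⟩ | ⟨a, ha, Q', hQ', rfl⟩)
          · simpa [nil₀, Fin.sum_univ_succ] using (hT₀ Q').mp hQ'
          · have h := ((hT a ha).1 Q').mp hQ'
            rw [Fin.sum_univ_succ] at h ⊢
            simp only [push, Fin.cons_zero, Fin.cons_succ, Fin.tail]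
            rw [← Multiset.cons_coe, Multiset.cons_add, h, Finset.erase_val,
              Multiset.cons_erase ha]
        · intro h
          rw [Fin.sum_univ_succ] at h
          rcases hQ : Q 0 with _ | ⟨a, l⟩
          · left
            refine ⟨Fin.tail Q, (hT₀ _).mpr ?_, ?_⟩
            · simpa [hQ, Fin.tail] using h
            · simp only [nil₀]
              rw [← hQ, Fin.cons_self_tail]
          · right
            rw [hQ, ← Multiset.cons_coe, Multiset.cons_add] at h
            have ha : a ∈ S := by
              rw [← Finset.mem_val, ← h]; exact Multiset.mem_cons_self _ _
            refine ⟨a, ha, Fin.cons l (Fin.tail Q), ((hT a ha).1 _).mpr ?_, ?_⟩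
            · rw [Finset.erase_val, ← h, Multiset.erase_cons_head, Fin.sum_univ_succ]
              simp [Fin.tail]
            · simp only [push, Fin.cons_zero, Fin.tail_cons]
              rw [← hQ, Fin.cons_self_tail]
      · rw [Finset.card_union_of_disjoint, Finset.card_biUnion,
          Finset.card_image_of_injective _ nil_inj, hc₀,
          Finset.sum_congr rfl (g := fun _ => (d + 1).ascFactorial s), Finset.sum_const, hS,
          ascFactorial_recurrence d (s + 1)]
        · simp
        · intro a ha
          rw [Finset.card_image_of_injective _ (push_inj a), (hT a ha).2]
        · intro a _ b _ hab
          rw [Function.onFun, Finset.disjoint_left]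
          intro Q h1 h2
          obtain ⟨Q1, -, rfl⟩ := Finset.mem_image.mp h1
          obtain ⟨Q2, -, h⟩ := Finset.mem_image.mp h2
          exact hab (List.cons.inj (Fin.cons_inj.mp h).1).1.symm
        · rw [Finset.disjoint_left]
          intro Q h1 h2
          obtain ⟨Q1, -, rfl⟩ := Finset.mem_image.mp h1
          obtain ⟨a, -, h2⟩ := Finset.mem_biUnion.mp h2
          obtain ⟨Q2, -, h⟩ := Finset.mem_image.mp h2
          exact absurd (Fin.cons_inj.mp h).1 (by simp)

lemma isPermPartition_iff {n d : ℕ} (Q : Fin d → List (Fin n)) :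
    IsPermPartition Q ↔ ∑ j, (Q j : Multiset (Fin n)) = (Finset.univ : Finset (Fin n)).val := by
  have h : ((List.ofFn Q).flatten : Multiset (Fin n)) = ∑ j, (Q j : Multiset (Fin n)) := by
    rw [← List.sum_ofFn]
    induction d with
    | zero => simp
    | succ d ih =>
      rw [List.ofFn_succ, List.flatten_cons, ← Multiset.coe_add, ih, List.ofFn_succ, List.sum_cons]
  rw [IsPermPartition, ← Multiset.coe_eq_coe, h]
  rfl

lemma mem_of_sum_eq {α : Type*} {d : ℕ} {Q : Fin d → List α} {S : Finset α}
    (h : ∑ j, (Q j : Multiset α) = S.val) (x : α) : x ∈ S ↔ ∃ j, x ∈ Q j := by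
  rw [← Finset.mem_val, ← h, Multiset.mem_sum]
  simp

/-- The partitions being counted are exactly the entrywise concatenations of an arrangement of
`F` with an arrangement of its complement. -/
lemma mem_target_iff {n d : ℕ} (F : Finset (Fin n)) (Q : Fin d → List (Fin n)) :
    (IsPermPartition Q ∧ IsPrefixUnion Q F) ↔ ∃ P R : Fin d → List (Fin n),
      ∑ j, (P j : Multiset (Fin n)) = F.val ∧ ∑ j, (R j : Multiset (Fin n)) = Fᶜ.val ∧
        (fun j => P j ++ R j) = Q := by
  have huniv : F.val + Fᶜ.val = (Finset.univ : Finset (Fin n)).val := by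
    rw [← Finset.disjUnion_val F Fᶜ disjoint_compl_right, Finset.disjUnion_eq_union,
      Finset.union_compl]
  rw [isPermPartition_iff]
  constructor
  · rintro ⟨hQ, t, -, hF⟩
    have hsplit : ∑ j, ((Q j).take (t j) : Multiset (Fin n)) +
        ∑ j, ((Q j).drop (t j) : Multiset (Fin n)) = (Finset.univ : Finset (Fin n)).val := by
      rw [← Finset.sum_add_distrib, ← hQ]
      simp
    -- the prefixes contain no repetition, so their multiset sum is determined by its support
    have hP : ∑ j, ((Q j).take (t j) : Multiset (Fin n)) = F.val := by
      have hnd : (∑ j, ((Q j).take (t j) : Multiset (Fin n))).Nodup :=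
        Multiset.nodup_of_le (hsplit ▸ Multiset.le_add_right _ _) Finset.univ.nodup
      refine (Multiset.Nodup.ext hnd F.nodup).mpr fun x => ?_
      rw [hF, Multiset.mem_sum]
      simp
    refine ⟨_, _, hP, ?_, funext fun j => List.take_append_drop (t j) (Q j)⟩
    rw [hP, ← huniv] at hsplit
    exact add_left_cancel hsplit
  · rintro ⟨P, R, hP, hR, rfl⟩
    refine ⟨?_, fun j => (P j).length, by simp, ?_⟩
    · rw [← huniv, ← hP, ← hR, ← Finset.sum_add_distrib]
      simp
    · ext x
      rw [mem_of_sum_eq hP]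
      simp

/-- Concatenation loses no information: the two parts are recovered by filtering for membership
in `S`. -/
lemma append_injective {α : Type*} [DecidableEq α] {d : ℕ} {S S' : Finset α} (hd : Disjoint S S')
    {P R P' R' : Fin d → List α}
    (hP : ∑ j, (P j : Multiset α) = S.val) (hR : ∑ j, (R j : Multiset α) = S'.val)
    (hP' : ∑ j, (P' j : Multiset α) = S.val) (hR' : ∑ j, (R' j : Multiset α) = S'.val)
    (h : (fun j => P j ++ R j) = fun j => P' j ++ R' j) : P = P' ∧ R = R' := by
  have hfilter : ∀ {P R : Fin d → List α}, ∑ j, (P j : Multiset α) = S.val →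
      ∑ j, (R j : Multiset α) = S'.val → ∀ j, (P j ++ R j).filter (· ∈ S) = P j := by
    intro P R hP hR j
    rw [List.filter_append, List.filter_eq_self.mpr, List.filter_eq_nil_iff.mpr, List.append_nil]
    · intro x hx
      simpa using Finset.disjoint_right.mp hd ((mem_of_sum_eq hR x).mpr ⟨j, hx⟩)
    · intro x hx
      simpa using (mem_of_sum_eq hP x).mpr ⟨j, hx⟩
  have hPP : P = P' := by
    funext j
    rw [← hfilter hP hR j, ← hfilter hP' hR' j, congrFun h j]
  subst hPP
  exact ⟨rfl, funext fun j => List.append_cancel_left (congrFun h j)⟩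

/-- For `F ⊆ [n]` and `d ≥ 1`, the number `N` of permutation d-partitions
of `[n]` having `F` as a prefix union satisfies
`((d−1)!)² · N = (|F|+d−1)! · (n−|F|+d−1)!`. -/
theorem stmt_6 (n d : ℕ) (hd : 1 ≤ d) (F : Finset (Fin n)) :
    (Nat.factorial (d - 1)) ^ 2 *
        {Q : Fin d → List (Fin n) | IsPermPartition Q ∧ IsPrefixUnion Q F}.ncard =
      Nat.factorial (F.card + d - 1) * Nat.factorial (n - F.card + d - 1) := by
  obtain ⟨A, hA, hAc⟩ := exists_arrangements d _ F rfl
  obtain ⟨B, hB, hBc⟩ := exists_arrangements d _ Fᶜ rfl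
  have hset : {Q : Fin d → List (Fin n) | IsPermPartition Q ∧ IsPrefixUnion Q F} =
      (((A ×ˢ B).image fun p j => p.1 j ++ p.2 j : Finset (Fin d → List (Fin n))) :
        Set (Fin d → List (Fin n))) := by
    ext Q
    simp [mem_target_iff, hA, hB, and_assoc]
  rw [hset, Set.ncard_coe_finset, Finset.card_image_of_injOn, Finset.card_product, hAc, hBc,
    Finset.card_compl, Fintype.card_fin]
  · obtain ⟨e, rfl⟩ := Nat.exists_eq_add_of_le' hd
    have h : ∀ s, (s + (e + 1) - 1).factorial = e.factorial * (e + 1).ascFactorial s := by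
      intro s
      rw [Nat.factorial_mul_ascFactorial]
      congr 1
      omega
    rw [h, h, Nat.add_sub_cancel]
    ring
  · rintro ⟨P, R⟩ h1 ⟨P', R'⟩ h2 h
    simp only [Finset.coe_product, Set.mem_prod, Finset.mem_coe, hA, hB] at h1 h2
    obtain ⟨rfl, rfl⟩ := append_injective disjoint_compl_right h1.1 h1.2 h2.1 h2.2 h
    rfl
end

section
/- For all integers n ≥ 0 and d ≥ 1, the binomial coefficients satisfy C(n + 2d − 2, ⌊n/2⌋ + d − 1) ≤ 4^{d−1} · C(n, ⌊n/2⌋). -/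
/-- Pascal's rule writes `C(n + k, r)` as a sum of `2 ^ k` entries (some possibly zero) of row `n`,
each of which is at most the middle entry of that row. -/
theorem choose_add_le_two_pow_mul_middle (n k r : ℕ) :
    (n + k).choose r ≤ 2 ^ k * n.choose (n / 2) := by
  induction k generalizing r with
  | zero => simpa using Nat.choose_le_middle r n
  | succ k ih =>
    cases r with
    | zero =>
      have h := ih 0
      rw [Nat.choose_zero_right] at h ⊢
      rw [pow_succ]
      linarith
    | succ r =>
      have h₁ := ih r
      have h₂ := ih (r + 1)
      rw [← add_assoc, Nat.choose_succ_succ', pow_succ]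
      linarith

/-- For all `n ≥ 0` and `d ≥ 1`,
`C(n+2d−2, ⌊n/2⌋+d−1) ≤ 4^(d−1) · C(n, ⌊n/2⌋)`. -/
theorem stmt_9 (n d : ℕ) (hd : 1 ≤ d) :
    (n + 2 * d - 2).choose (n / 2 + d - 1) ≤ 4 ^ (d - 1) * n.choose (n / 2) := by
  have h := choose_add_le_two_pow_mul_middle n (2 * (d - 1)) (n / 2 + d - 1)
  rw [pow_mul] at h
  rwa [show n + 2 * d - 2 = n + 2 * (d - 1) by omega]
end

section
/- Let d ≥ 2, k ≥ 1, let A be a permutation d-matrix of size k^d, and let M be an A-free d-matrix of size n×⋯×n, where n = s·t for positive integers s, t. Partition M into blocks: for b = (b₁,…,b_d) ∈ {1,…,t}^d, the block S_b consists of the entries M(a₁,…,a_d) with s(b_j − 1) < a_j ≤ s·b_j for all j. Fix a direction i ∈ {1,…,d} and values b_j ∈ {1,…,t} for all j ≠ i; the corresponding i-blockcolumn consists of the t blocks obtained by letting b_i range over {1,…,t}. Then the number of blocks S in this i-blockcolumn such that Proj_i S contains Proj_i A is at most (k − 1)·C(s^{d−1}, k). -/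
/-- The block of a d-matrix of size (s·t)^d at block-position `b`: the entries
`M(a)` with `s·(bⱼ − 1) < aⱼ ≤ s·bⱼ` (0-indexed: `s·bⱼ ≤ aⱼ < s·(bⱼ+1)`). -/
def blockOf {d s t : ℕ} (M : (Fin d → Fin (s * t)) → Bool) (b : Fin d → Fin t) :
    (Fin d → Fin s) → Bool :=
  fun a => M fun j => ⟨s * (b j).val + (a j).val, by
    have h2 : ((b j) : ℕ) < t := (b j).isLt
    calc s * (b j).val + (a j).val < s * ((b j).val + 1) := by
          rw [Nat.mul_succ]; omega
      _ ≤ s * t := Nat.mul_le_mul_left s h2⟩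

/-- The projection of a d-matrix along direction `i`: the (d−1)-matrix indexed by the
remaining coordinates whose entry is 1 iff some entry of `M` with those coordinates is 1. -/
def proj {d s : ℕ} (i : Fin d) (M : (Fin d → Fin s) → Bool) :
    ({j : Fin d // j ≠ i} → Fin s) → Bool :=
  fun v => decide (∃ c : Fin s,
    M (fun j => if h : j = i then c else v ⟨j, h⟩) = true)

/-- The positions in a projected block onto which the maps `f` send the projected ones of `A`. -/
def imageSet {d k s : ℕ} (A : (Fin d → Fin k) → Bool) (i : Fin d)
    (f : {j : Fin d // j ≠ i} → Fin k → Fin s) : Finset ({j : Fin d // j ≠ i} → Fin s) :=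
  (Finset.univ.filter fun p => A p = true).image fun p j => f j (p j)

lemma card_imageSet {d k s : ℕ} (hd : 2 ≤ d) {A : (Fin d → Fin k) → Bool} (hA : IsPermMatrix A)
    (i : Fin d) {f : {j : Fin d // j ≠ i} → Fin k → Fin s} (hf : ∀ j, StrictMono (f j)) :
    (imageSet A i f).card = k := by
  rw [imageSet, Finset.card_image_of_injOn, hA.1]
  intro p hp q hq hpq
  have : Nontrivial (Fin d) := Fin.nontrivial_iff_two_le.2 hd
  -- a single direction other than `i` already separates the ones of `A`
  obtain ⟨j, hj⟩ := exists_ne i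
  have h : p j = q j := (hf ⟨j, hj⟩).injective (congrFun hpq ⟨j, hj⟩)
  exact (hA.2 j (q j)).unique ⟨by simpa using hp, h⟩ ⟨by simpa using hq, rfl⟩

lemma range_eq_of_imageSet {d k s : ℕ} {A : (Fin d → Fin k) → Bool} (hA : IsPermMatrix A)
    (i : Fin d) (f : {j : Fin d // j ≠ i} → Fin k → Fin s) (j : {j : Fin d // j ≠ i}) :
    Set.range (f j) = Set.image (fun x : {j : Fin d // j ≠ i} → Fin s => x j)
      (imageSet A i f : Set ({j : Fin d // j ≠ i} → Fin s)) := by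
  ext y
  simp only [imageSet, Finset.coe_image, Set.mem_range, Set.mem_image, Finset.coe_filter,
    Finset.mem_univ, true_and, Set.mem_ofPred_eq, exists_exists_and_eq_and]
  constructor
  · rintro ⟨v, rfl⟩
    obtain ⟨p, ⟨hp, hv⟩, -⟩ := hA.2 j v
    exact ⟨p, hp, by rw [hv]⟩
  · rintro ⟨p, -, rfl⟩
    exact ⟨_, rfl⟩

lemma eq_of_imageSet_eq {d k s : ℕ} {A : (Fin d → Fin k) → Bool} (hA : IsPermMatrix A)
    {i : Fin d} {f g : {j : Fin d // j ≠ i} → Fin k → Fin s}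
    (hf : ∀ j, StrictMono (f j)) (hg : ∀ j, StrictMono (g j))
    (h : imageSet A i f = imageSet A i g) : f = g := by
  funext j
  rw [← StrictMono.range_inj (hf j) (hg j), range_eq_of_imageSet hA, range_eq_of_imageSet hA, h]

/-- If the same maps `f` embed `Proj_i A` into the projections of `k` blocks of an
`i`-blockcolumn, then `M` contains `A`. -/
lemma contains_of_common_embedding {d k s t : ℕ} {A : (Fin d → Fin k) → Bool}
    {M : (Fin d → Fin (s * t)) → Bool} (i : Fin d) (b : Fin d → Fin t)
    (f : {j : Fin d // j ≠ i} → Fin k → Fin s) (hf : ∀ j, StrictMono (f j))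
    (c : Fin k → Fin t) (hc : StrictMono c) (hA : IsPermMatrix A)
    (h : ∀ v p, proj i A p = true →
      proj i (blockOf M (Function.update b i (c v))) (fun j => f j (p j)) = true) :
    MatContains M A := by
  -- `e v` is the height, inside the block `c v`, of the one with `i`-th coordinate `v`
  have key : ∀ v : Fin k, ∃ e : Fin s, ∀ p, A p = true → p i = v →
      blockOf M (Function.update b i (c v))
        (fun j => if hj : j = i then e else f ⟨j, hj⟩ (p j)) = true := by
    intro v
    obtain ⟨p, ⟨hp, hv⟩, hu⟩ := hA.2 i v
    have hpr : proj i A (fun j => p j) = true := by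
      simp only [proj, decide_eq_true_eq]
      refine ⟨p i, ?_⟩
      convert hp using 2
      funext j
      split_ifs with hj
      · rw [hj]
      · rfl
    have := h v _ hpr
    simp only [proj, decide_eq_true_eq] at this
    obtain ⟨e, he⟩ := this
    refine ⟨e, fun q hq hqv => ?_⟩
    rw [hu q ⟨hq, hqv⟩]
    exact he
  choose e he using key
  have bd : ∀ (x : Fin t) (y : Fin s), s * x.val + y.val < s * t := fun x y =>
    calc s * x.val + y.val < s * (x.val + 1) := by rw [Nat.mul_succ]; omega
      _ ≤ s * t := Nat.mul_le_mul_left s x.isLt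
  refine ⟨fun j v => if hj : j = i then ⟨s * (c v).val + (e v).val, bd _ _⟩
    else ⟨s * (b j).val + (f ⟨j, hj⟩ v).val, bd _ _⟩, fun j v w hvw => ?_, fun p hp => ?_⟩
  · by_cases hj : j = i
    · have h1 : (c v).val + 1 ≤ (c w).val := hc hvw
      have h2 := Nat.mul_le_mul_left s h1
      rw [Nat.mul_succ] at h2
      have h3 := (e v).isLt
      simp only [hj, dite_true, Fin.mk_lt_mk]
      omega
    · have h1 : (f ⟨j, hj⟩ v).val < (f ⟨j, hj⟩ w).val := hf ⟨j, hj⟩ hvw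
      simp only [hj, dite_false, Fin.mk_lt_mk]
      omega
  · have h1 := he (p i) p hp rfl
    rw [blockOf] at h1
    convert h1 using 2
    funext j
    by_cases hj : j = i
    · subst hj
      simp
    · simp [hj]

/-- Let `d ≥ 2`, `k ≥ 1`, `A` a permutation d-matrix of size `k^d`, and
`M` an `A`-free d-matrix of size `(s·t)^d`, partitioned into blocks of size `s^d`. Fix a
direction `i` and block coordinates `b j` for `j ≠ i`. Then the number of blocks `S` in the
corresponding i-blockcolumn with `Proj_i S` containing `Proj_i A` is at most
`(k−1)·C(s^(d−1), k)`. -/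
theorem stmt_11 (d k s t : ℕ) (hd : 2 ≤ d) (hk : 1 ≤ k) (hs : 0 < s) (ht : 0 < t)
    (A : (Fin d → Fin k) → Bool) (hA : IsPermMatrix A)
    (M : (Fin d → Fin (s * t)) → Bool) (hM : ¬ MatContains M A)
    (i : Fin d) (b : Fin d → Fin t) :
    {c : Fin t |
        MatContains (proj i (blockOf M (Function.update b i c))) (proj i A)}.ncard ≤
      (k - 1) * (s ^ (d - 1)).choose k := by
  classical
  have : NeZero s := ⟨hs.ne'⟩
  by_contra hlt
  push Not at hlt
  apply hM
  set S : Set (Fin t) := {c : Fin t |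
    MatContains (proj i (blockOf M (Function.update b i c))) (proj i A)} with hS
  have hex : ∀ c ∈ S, ∃ f : {j : Fin d // j ≠ i} → Fin k → Fin s, (∀ j, StrictMono (f j)) ∧
      ∀ p, proj i A p = true →
        proj i (blockOf M (Function.update b i c)) (fun j => f j (p j)) = true :=
    fun c hc => hc
  choose! f hf hfA using hex
  rw [Set.ncard_eq_toFinset_card'] at hlt
  have hcard : (Finset.powersetCard k
      (Finset.univ : Finset ({j : Fin d // j ≠ i} → Fin s))).card = (s ^ (d - 1)).choose k := by
    rw [Finset.card_powersetCard, Finset.card_univ]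
    simp
  rw [← hcard, mul_comm] at hlt
  obtain ⟨T, -, hT⟩ := Finset.exists_lt_card_fiber_of_mul_lt_card_of_maps_to
    (f := fun c => imageSet A i (f c))
    (fun c hc => Finset.mem_powersetCard.2
      ⟨Finset.subset_univ _, card_imageSet hd hA i (hf c (by simpa using hc))⟩) hlt
  obtain ⟨U, hU, hUk⟩ := Finset.exists_subset_card_eq (Nat.le_of_pred_lt hT)
  have hUS : ∀ v, U.orderEmbOfFin hUk v ∈ S ∧ imageSet A i (f (U.orderEmbOfFin hUk v)) = T :=
    fun v => by simpa using hU (U.orderEmbOfFin_mem hUk v)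
  let v₀ : Fin k := ⟨0, hk⟩
  have hsame : ∀ v, f (U.orderEmbOfFin hUk v) = f (U.orderEmbOfFin hUk v₀) := fun v =>
    eq_of_imageSet_eq hA (hf _ (hUS v).1) (hf _ (hUS v₀).1) ((hUS v).2.trans (hUS v₀).2.symm)
  refine contains_of_common_embedding i b (f (U.orderEmbOfFin hUk v₀)) (hf _ (hUS v₀).1)
    (U.orderEmbOfFin hUk) (U.orderEmbOfFin hUk).strictMono hA fun v p hp => ?_
  rw [← hsame v]
  exact hfA _ (hUS v).1 p hp
end

section
/- Let d ≥ 1, let A be a permutation d-matrix of size k^d, and let M be a d-matrix of size n×⋯×n where n = s·t for positive integers s, t. Partition M into blocks: for b = (b₁,…,b_d) ∈ {1,…,t}^d, the block S_b consists of the entries M(a₁,…,a_d) with s(b_j − 1) < a_j ≤ s·b_j for all j. Define the contracted d-matrix M'' of size t×⋯×t by M''(b) = 1 iff the block S_b contains at least one 1-entry. If M is A-free, then M'' is A-free. -/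
/-- If `A` is a permutation d-matrix and `M` is an `A`-free d-matrix of
size `(s·t)^d`, then the contracted d-matrix `M''` of size `t^d`, whose entry at `b` is 1
iff the block `S_b` contains a 1-entry, is also `A`-free. -/
theorem stmt_12 (d k s t : ℕ) (hd : 1 ≤ d) (hs : 0 < s) (ht : 0 < t)
    (A : (Fin d → Fin k) → Bool) (hA : IsPermMatrix A)
    (M : (Fin d → Fin (s * t)) → Bool) (hM : ¬ MatContains M A)
    (M'' : (Fin d → Fin t) → Bool)
    (hM'' : ∀ b, M'' b = true ↔ ∃ a : Fin d → Fin s, blockOf M b a = true) :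
    ¬ MatContains M'' A := by
  rintro ⟨f, hf, hfA⟩
  apply hM
  -- The value of `a i` is arbitrary when `A i` is not a 1-entry; `0 < s` makes this possible.
  have hex : ∀ i, ∃ a : Fin d → Fin s,
      A i = true → blockOf M (fun j => f j (i j)) a = true := by
    intro i
    by_cases hi : A i = true
    · obtain ⟨a, ha⟩ := (hM'' _).1 (hfA i hi)
      exact ⟨a, fun _ => ha⟩
    · exact ⟨fun _ => ⟨0, hs⟩, fun h => absurd h hi⟩
  choose a ha using hex
  choose e _ he using hA.2
  have hstep : ∀ (x y : ℕ) (r : Fin s), x < y → s * x + r < s * y := fun x y r hxy =>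
    calc s * x + r < s * (x + 1) := by rw [Nat.mul_succ]; omega
      _ ≤ s * y := Nat.mul_le_mul_left s hxy
  refine ⟨fun j v => ⟨s * (f j v).val + (a (e j v) j).val, hstep _ _ _ (f j v).isLt⟩, ?_, ?_⟩
  · intro j v w hvw
    exact (hstep _ _ _ (hf j hvw)).trans_le (Nat.le_add_right _ _)
  · intro i hi
    have hei : ∀ j, e j (i j) = i := fun j => (he j (i j) i ⟨hi, rfl⟩).symm
    have hblock := ha i hi
    simp only [blockOf] at hblock
    simpa only [hei] using hblock
end

section
/- For every finite poset P and every n, any family F of subsets of [n] = {1,…,n} that does not contain P as a weak subposet satisfies |F| ≤ (|P| − 1) · C(n, ⌊n/2⌋); that is, La(n,P) ≤ (|P| − 1) · C(n, ⌊n/2⌋). -/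
/-!
A poset `P` embeds weakly into a chain with `|P|` elements, through any linear extension of `P`.
So a `P`-free family has no chain of `|P|` sets, and it suffices to prove Erdős's bound: a family
with more than `k * C(n, ⌊n/2⌋)` members contains a chain of `k + 1` sets
(`exists_chain_of_lt_card`). The minimal members of a family form an antichain, of which there
are at most `C(n, ⌊n/2⌋)` by Sperner's theorem. Removing them and arguing by induction on `k`
leaves a chain of `k` sets, whose bottom is not minimal and hence can be extended downwards.
-/

/-- The family `F` of subsets of `[n]` contains the poset `P` as a weak subposet. -/
def ContainsWeak (P : Type*) [PartialOrder P] {n : ℕ}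
    (F : Finset (Finset (Fin n))) : Prop :=
  ∃ α : P → Finset (Fin n), Function.Injective α ∧ (∀ p, α p ∈ F) ∧
    ∀ x y : P, x < y → α x ⊂ α y

theorem exists_chain_of_lt_card {n : ℕ} (k : ℕ) (F : Finset (Finset (Fin n)))
    (hF : k * n.choose (n / 2) < F.card) :
    ∃ f : Fin (k + 1) → Finset (Fin n), StrictMono f ∧ ∀ i, f i ∈ F := by
  classical
  induction k generalizing F with
  | zero =>
    obtain ⟨s, hs⟩ := Finset.card_pos.1 (by simpa using hF)
    exact ⟨fun _ => s, fun i j hij => by omega, fun _ => hs⟩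
  | succ k ih =>
    let M := F.filter fun s => ∀ t ∈ F, ¬ t ⊂ s
    have hM : M.card ≤ n.choose (n / 2) := by
      have hanti : IsAntichain (· ⊆ ·) (SetLike.coe M) := by
        intro s hs t ht hne hst
        have hs' := (Finset.mem_filter.1 hs).1
        exact (Finset.mem_filter.1 ht).2 s hs' (hst.ssubset_of_ne hne)
      simpa using hanti.sperner
    have hcard : (F \ M).card + M.card = F.card :=
      Finset.card_sdiff_add_card_eq_card (Finset.filter_subset _ _)
    obtain ⟨f, hf, hfF⟩ := ih (F \ M) (by rw [Nat.add_mul] at hF; omega)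
    have h0 := Finset.mem_sdiff.1 (hfF 0)
    obtain ⟨t, htF, ht⟩ : ∃ t ∈ F, t ⊂ f 0 := by
      by_contra! h
      exact h0.2 (Finset.mem_filter.2 ⟨h0.1, h⟩)
    refine ⟨Fin.cons t f, ?_, Fin.cases htF fun i => (Finset.mem_sdiff.1 (hfF i)).1⟩
    exact hf.vecCons ht

/-- For every finite poset `P` and every `n`, any `P`-free (as a weak
subposet) family of subsets of `[n]` has size at most `(|P|−1)·C(n, ⌊n/2⌋)`. -/
theorem stmt_13 (P : Type) [PartialOrder P] [Fintype P] (n : ℕ)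
    (F : Finset (Finset (Fin n))) (hF : ¬ ContainsWeak P F) :
    F.card ≤ (Fintype.card P - 1) * n.choose (n / 2) := by
  by_contra! h
  apply hF
  -- The empty poset is contained in every family; this case makes `|P| - 1` a true subtraction.
  rcases isEmpty_or_nonempty P with hP | hP
  · exact ⟨fun p => hP.elim p, fun p => hP.elim p, fun p => hP.elim p, fun p => hP.elim p⟩
  obtain ⟨f, hf, hfF⟩ := exists_chain_of_lt_card _ F h
  have hcard : Fintype.card P = Fintype.card P - 1 + 1 :=
    (Nat.sub_add_cancel Fintype.card_pos).symm
  let inst : Fintype (LinearExtension P) := ‹Fintype P›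
  let e : Fin (Fintype.card P - 1 + 1) ≃o LinearExtension P := monoEquivOfFin _ hcard
  have hinj : Function.Injective fun p : P => e.symm (toLinearExtension p) :=
    e.symm.injective.comp fun _ _ hxy => hxy
  refine ⟨fun p => f (e.symm (toLinearExtension p)), hf.injective.comp hinj,
    fun p => hfF _, fun x y hxy => hf ?_⟩
  exact lt_of_le_of_ne (e.symm.monotone (toLinearExtension.monotone hxy.le)) (hinj.ne hxy.ne)
end
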